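/- arXiv:2406.08339 — 2 statements merged into one kernel-verified Lean document; each statement's English description precedes it below -/
import Mathlib

section
/- Let η := 1/(2·4·12²·256). There is a constant c_l > 0 such that for all δ ∈ (0, η²/16) and all ε ∈ (0, η/4) with δ ≤ ε, every u ∈ S₀(ε) satisfies E_{ε,δ}(u) ≥ c_l · min{δ², ε·δ^{3/2}·(|ln(ε/δ^{1/2})| + 1)} (Lemma 5.9, lower bound for small δ). -/
open Real Finset

noncomputable section

/-- `Kof ε` is the largest integer `K` with `K * ε < 1`. -/
def Kof (ε : ℝ) : ℤ := ⌈1 / ε⌉ - 1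

/-- Index set of the lattice `[0,1)² ∩ εℤ²`. -/
def Idx (ε : ℝ) : Finset (ℤ × ℤ) :=
  Finset.Icc 0 (Kof ε) ×ˢ Finset.Icc 0 (Kof ε)

/-- Indices `(i,j)` with `i + 2 ≤ K`. -/
def IdxH (ε : ℝ) : Finset (ℤ × ℤ) :=
  Finset.Icc 0 (Kof ε - 2) ×ˢ Finset.Icc 0 (Kof ε)

/-- Indices `(i,j)` with `j + 2 ≤ K`. -/
def IdxV (ε : ℝ) : Finset (ℤ × ℤ) :=
  Finset.Icc 0 (Kof ε) ×ˢ Finset.Icc 0 (Kof ε - 2)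

/-- Squared Euclidean norm on `ℝ × ℝ`. -/
def sqnorm (v : ℝ × ℝ) : ℝ := v.1 ^ 2 + v.2 ^ 2

/-- Euclidean scalar product on `ℝ × ℝ`. -/
def dotp (a b : ℝ × ℝ) : ℝ := a.1 * b.1 + a.2 * b.2

/-- Cross product `a × b = a₁b₂ − a₂b₁`. -/
def crossp (a b : ℝ × ℝ) : ℝ := a.1 * b.2 - a.2 * b.1

/-- sign with convention `sign 0 = -1`. -/
def sgn (x : ℝ) : ℝ := if 0 < x then 1 else -1

/-- A spin field: unit vectors on the lattice. -/
def IsSpin (ε : ℝ) (u : ℤ × ℤ → ℝ × ℝ) : Prop :=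
  ∀ p ∈ Idx ε, sqnorm (u p) = 1

/-- Spin fields with ferromagnetic Dirichlet boundary condition on the left boundary. -/
def InS0 (ε : ℝ) (u : ℤ × ℤ → ℝ × ℝ) : Prop :=
  IsSpin ε u ∧ ∀ j ∈ Finset.Icc (0 : ℤ) (Kof ε), u (0, j) = (0, 1)

/-- Horizontal part of the energy. -/
def Ehor (ε δ : ℝ) (u : ℤ × ℤ → ℝ × ℝ) : ℝ :=
  ε ^ 2 / 2 * ∑ p ∈ IdxH ε,
    sqnorm (u p - (2 * (1 - δ)) • u (p.1 + 1, p.2) + u (p.1 + 2, p.2))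

/-- Vertical part of the energy. -/
def Ever (ε δ : ℝ) (u : ℤ × ℤ → ℝ × ℝ) : ℝ :=
  ε ^ 2 / 2 * ∑ p ∈ IdxV ε,
    sqnorm (u p - (2 * (1 - δ)) • u (p.1, p.2 + 1) + u (p.1, p.2 + 2))

/-- The total energy `E_{ε,δ}`. -/
def E (ε δ : ℝ) (u : ℤ × ℤ → ℝ × ℝ) : ℝ := Ehor ε δ u + Ever ε δ u

/-- The scaling function `s(ε,δ)`. -/
def sfun (ε δ : ℝ) : ℝ :=
  min (δ ^ 2)
    (min (ε * (δ * Real.sqrt δ) * (|Real.log (ε / Real.sqrt δ)| + 1)) (ε * Real.sqrt δ))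

/-- Horizontal angular velocity of a spin field. -/
def thetaH (u : ℤ × ℤ → ℝ × ℝ) (p : ℤ × ℤ) : ℝ :=
  sgn (crossp (u p) (u (p.1 + 1, p.2))) * Real.arccos (dotp (u p) (u (p.1 + 1, p.2)))

/-- Vertical angular velocity of a spin field. -/
def thetaV (u : ℤ × ℤ → ℝ × ℝ) (p : ℤ × ℤ) : ℝ :=
  sgn (crossp (u p) (u (p.1, p.2 + 1))) * Real.arccos (dotp (u p) (u (p.1, p.2 + 1)))

/-- The function `p` of Lemma 3.1. -/
def pfun (θ₁ θ₂ : ℝ) : ℝ :=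
  if θ₁ = θ₂ then 1
  else (Real.sin θ₁ ^ 2 + Real.sin θ₂ ^ 2 - (1 - Real.cos (θ₁ + θ₂))) /
    (2 * (Real.sin (θ₂ / 2) - Real.sin (θ₁ / 2)) ^ 2)

end

/-- The local energy density in terms of two consecutive angles. -/
noncomputable def qd (δ a b : ℝ) : ℝ :=
  (Real.cos a + Real.cos b - 2 * (1 - δ)) ^ 2 + (Real.sin b - Real.sin a) ^ 2

lemma qd_nonneg (δ a b : ℝ) : 0 ≤ qd δ a b := by unfold qd; positivity

lemma cos_le_fifth {a : ℝ} (ha : |a| ≤ 1) : Real.cos a ≤ 1 - a ^ 2 / 5 := by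
  have h := Real.cos_le_one_sub_mul_cos_sq (x := a) (by linarith [Real.pi_gt_three])
  have hp : Real.pi ^ 2 ≤ 10 := by nlinarith [Real.pi_lt_d2, Real.pi_pos]
  have h2 : (1 : ℝ) / 5 ≤ 2 / Real.pi ^ 2 := by
    rw [div_le_div_iff₀ (by norm_num) (by positivity)]; linarith
  nlinarith [sq_nonneg a]

lemma abs_sin_ge {x : ℝ} (hx : |x| ≤ 1) : |x| / 2 ≤ |Real.sin x| := by
  have key : ∀ y : ℝ, 0 ≤ y → y ≤ 1 → y / 2 ≤ Real.sin y := by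
    intro y h0 h1
    have := Real.mul_le_sin h0 (by linarith [Real.pi_gt_three])
    have h2 : (1 : ℝ) / 2 ≤ 2 / Real.pi := by
      rw [div_le_div_iff₀ (by norm_num) Real.pi_pos]; linarith [Real.pi_le_four]
    nlinarith
  rcases le_total 0 x with h | h
  · rw [abs_of_nonneg h] at hx ⊢
    exact (key x h hx).trans (le_abs_self _)
  · rw [abs_of_nonpos h] at hx ⊢
    have := key (-x) (by linarith) hx
    rw [Real.sin_neg] at this
    exact this.trans (neg_le_abs _)

lemma sin_diff {a b : ℝ} (ha : |a| ≤ 1) (hb : |b| ≤ 1) :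
    (b - a) ^ 2 / 16 ≤ (Real.sin b - Real.sin a) ^ 2 := by
  have e := Real.sin_sub_sin b a
  rw [abs_le] at ha hb
  have h1 := abs_sin_ge (x := (b - a) / 2) (by rw [abs_le]; constructor <;> linarith)
  have h2 := Real.one_sub_sq_div_two_le_cos (x := (b + a) / 2)
  have h3 : (1 : ℝ) / 2 ≤ Real.cos ((b + a) / 2) := by nlinarith
  have h4 : ((b - a) / 2) ^ 2 / 4 ≤ Real.sin ((b - a) / 2) ^ 2 := by
    rw [← sq_abs ((b - a) / 2), ← sq_abs (Real.sin _)]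
    nlinarith [abs_nonneg ((b - a) / 2)]
  have h5 : (1 : ℝ) / 4 ≤ Real.cos ((b + a) / 2) ^ 2 := by nlinarith
  rw [e, mul_pow, mul_pow]
  nlinarith [sq_nonneg (Real.sin ((b - a) / 2))]

lemma hor_point {s a b : ℝ} (hs : 0 < s) (ha : |a| ≤ 1) (h4 : 4 * s ≤ |a|) :
    s ^ 2 * a ^ 2 ≤ 12 * qd (s ^ 2) a b := by
  have h1 := cos_le_fifth ha
  have h2 := Real.cos_le_one b
  have h3 : 16 * s ^ 2 ≤ a ^ 2 := by rw [← sq_abs a]; nlinarith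
  have h5 : 0 ≤ a ^ 2 * (3 / 40) := by positivity
  have h6 : a ^ 2 * (3 / 40) ≤ -(Real.cos a + Real.cos b - 2 * (1 - s ^ 2)) := by linarith
  have h7 : (a ^ 2 * (3 / 40)) ^ 2 ≤ (Real.cos a + Real.cos b - 2 * (1 - s ^ 2)) ^ 2 := by
    rw [← neg_sq (Real.cos a + _ - _)]; exact pow_le_pow_left₀ h5 h6 2
  have h8 : 0 ≤ (Real.sin b - Real.sin a) ^ 2 := sq_nonneg _
  unfold qd
  nlinarith [mul_le_mul_of_nonneg_right h3 (sq_nonneg a)]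

/-- clamp to `[-r,r]`. -/
noncomputable def clampr (r x : ℝ) : ℝ := max (-r) (min r x)

lemma clampr_lip (r x y : ℝ) : |clampr r x - clampr r y| ≤ |x - y| := by
  unfold clampr
  refine (abs_max_sub_max_le_max _ _ _ _).trans ?_
  rw [sub_self, abs_zero, max_eq_right (abs_nonneg _)]
  refine (abs_min_sub_min_le_max _ _ _ _).trans ?_
  rw [sub_self, abs_zero, max_eq_right (abs_nonneg _)]

lemma clampr_mem {r : ℝ} (hr : 0 ≤ r) (x : ℝ) : -r ≤ clampr r x ∧ clampr r x ≤ r := by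
  unfold clampr
  refine ⟨le_max_left _ _, max_le (by linarith) (min_le_left _ _)⟩

lemma qd_small {s a b : ℝ} (ha : |a| ≤ s) (hb : |b| ≤ s) :
    s ^ 4 + (Real.sin b - Real.sin a) ^ 2 ≤ qd (s ^ 2) a b := by
  have h1 := Real.one_sub_sq_div_two_le_cos (x := a)
  have h2 := Real.one_sub_sq_div_two_le_cos (x := b)
  have h3 : a ^ 2 ≤ s ^ 2 := by rw [← sq_abs a]; exact pow_le_pow_left₀ (abs_nonneg _) ha 2
  have h4 : b ^ 2 ≤ s ^ 2 := by rw [← sq_abs b]; exact pow_le_pow_left₀ (abs_nonneg _) hb 2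
  have h5 : s ^ 2 ≤ Real.cos a + Real.cos b - 2 * (1 - s ^ 2) := by linarith
  have h6 := pow_le_pow_left₀ (sq_nonneg s) h5 2
  unfold qd
  nlinarith

lemma ver_point {s a b : ℝ} (hs : 0 < s) (hs1 : s ≤ 1 / 2) (ha : |a| ≤ 1) (hb : |b| ≤ 1) :
    s ^ 2 * |clampr (3 / 4 * s) b - clampr (3 / 4 * s) a| ≤ 256 * qd (s ^ 2) a b := by
  have hd := sin_diff ha hb
  have hlip := clampr_lip (3 / 4 * s) b a
  by_cases h : |a| ≤ s ∧ |b| ≤ s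
  · have h1 := qd_small h.1 h.2
    rw [← sq_abs (b - a)] at hd
    have : s ^ 2 * |b - a| ≤ 256 * (s ^ 4 + |b - a| ^ 2 / 16) := by
      nlinarith [sq_nonneg (s ^ 2 - |b - a|), sq_nonneg (s ^ 2), sq_nonneg (|b - a|)]
    nlinarith [mul_le_mul_of_nonneg_left hlip (sq_nonneg s)]
  · have hq : (b - a) ^ 2 / 16 ≤ qd (s ^ 2) a b := by
      unfold qd; nlinarith [sq_nonneg (Real.cos a + Real.cos b - 2 * (1 - s ^ 2))]
    have hca := clampr_mem (r := 3 / 4 * s) (by linarith) a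
    have hcb := clampr_mem (r := 3 / 4 * s) (by linarith) b
    have hle : |clampr (3 / 4 * s) b - clampr (3 / 4 * s) a| ≤ 1 := by
      rw [abs_le]; constructor <;> linarith
    by_cases hz : clampr (3 / 4 * s) b = clampr (3 / 4 * s) a
    · rw [hz, sub_self, abs_zero, mul_zero]; linarith [qd_nonneg (s ^ 2) a b]
    · have hdiff : s / 4 ≤ |b - a| := by
        by_contra hcon
        push Not at hcon
        rw [abs_lt] at hcon
        apply hz
        unfold clampr
        rw [not_and_or] at h
        have hh : (s < a ∨ a < -s) ∨ (s < b ∨ b < -s) := by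
          rcases h with h | h
          · left; push Not at h; rcases lt_abs.1 h with h | h
            · left; exact h
            · right; linarith
          · right; push Not at h; rcases lt_abs.1 h with h | h
            · left; exact h
            · right; linarith
        rcases hh with (h | h) | (h | h)
        · rw [min_eq_left (by linarith), min_eq_left (by linarith)]
        · rw [min_eq_right (by linarith), min_eq_right (by linarith),
            max_eq_left (by linarith), max_eq_left (by linarith)]
        · rw [min_eq_left (by linarith), min_eq_left (by linarith)]
        · rw [min_eq_right (by linarith), min_eq_right (by linarith),
            max_eq_left (by linarith), max_eq_left (by linarith)]
      have h2 : s ^ 2 / 16 ≤ (b - a) ^ 2 := by rw [← sq_abs (b - a)]; nlinarith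
      nlinarith [mul_le_mul_of_nonneg_left hle (sq_nonneg s)]

lemma hardy (a : ℕ → ℝ) (M : ℕ) :
    ∑ n ∈ Finset.range M, ((∑ k ∈ Finset.range (n + 1), a k) / ((n : ℝ) + 1)) ^ 2
      ≤ 4 * ∑ n ∈ Finset.range M, a n ^ 2 := by
  set S : ℕ → ℝ := fun n => ∑ k ∈ Finset.range n, a k with hS
  have key : ∀ M : ℕ, ∑ n ∈ Finset.range M,
      ((S (n + 1) / ((n : ℝ) + 1)) ^ 2 - 2 * (S (n + 1) / ((n : ℝ) + 1)) * a n)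
        ≤ - (S M ^ 2 / (M : ℝ)) := by
    intro M
    induction M with
    | zero => simp [hS]
    | succ m ih =>
      rw [Finset.sum_range_succ]
      have hsucc : S (m + 1) = S m + a m := by simp [hS, Finset.sum_range_succ]
      have ham : a m = S (m + 1) - S m := by linarith
      rw [ham]
      rcases Nat.eq_zero_or_pos m with h0 | h0
      · subst h0
        simp only [Finset.range_zero, Finset.sum_empty]
        have : S 0 = 0 := by simp [hS]
        rw [this]; norm_num; nlinarith [sq_nonneg (S 1)]
      · have hm : (0 : ℝ) < m := by exact_mod_cast h0
        push_cast
        have : (S (m + 1) / ((m : ℝ) + 1)) ^ 2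
            - 2 * (S (m + 1) / ((m : ℝ) + 1)) * (S (m + 1) - S m)
            + S (m + 1) ^ 2 / ((m : ℝ) + 1) - S m ^ 2 / m
            = - m * (S (m + 1) / ((m : ℝ) + 1) - S m / m) ^ 2 := by
          field_simp; ring
        nlinarith [sq_nonneg (S (m + 1) / ((m : ℝ) + 1) - S m / m)]
  have h1 := key M
  have h2 : 0 ≤ S M ^ 2 / (M : ℝ) := by positivity
  have h3 : ∑ n ∈ Finset.range M, (1 / 2 * (S (n + 1) / ((n : ℝ) + 1)) ^ 2 - 2 * a n ^ 2)
      ≤ ∑ n ∈ Finset.range M,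
      ((S (n + 1) / ((n : ℝ) + 1)) ^ 2 - 2 * (S (n + 1) / ((n : ℝ) + 1)) * a n) := by
    apply Finset.sum_le_sum
    intro n _
    nlinarith [sq_nonneg (S (n + 1) / ((n : ℝ) + 1) - 2 * a n)]
  rw [Finset.sum_sub_distrib, ← Finset.mul_sum, ← Finset.mul_sum] at h3
  linarith

lemma row_bad {s : ℝ} (hs : 0 < s) (ψ : ℕ → ℝ) (M : ℕ) (h0 : ψ 0 = 0)
    (hd : ∀ k < M, |ψ (k + 1) - ψ k| ≤ 1) :
    s ^ 4 * ∑ m ∈ Finset.range M,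
        (if |ψ (m + 1)| ≤ 5 * s * ((m : ℝ) + 1) then (0 : ℝ) else 1)
      ≤ 48 * ∑ m ∈ Finset.range M,
        qd (s ^ 2) (ψ (m + 1) - ψ m) (ψ (m + 2) - ψ (m + 1)) := by
  set h : ℕ → ℝ := fun k => if 4 * s ≤ |ψ (k + 1) - ψ k| then |ψ (k + 1) - ψ k| else 0 with hh
  have hh0 : ∀ k, 0 ≤ h k := by
    intro k; simp only [hh]; split_ifs
    · exact abs_nonneg _
    · exact le_rfl
  have hle : ∀ k, |ψ (k + 1) - ψ k| ≤ 4 * s + h k := by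
    intro k; simp only [hh]; split_ifs with hc <;> linarith
  have hψ : ∀ n : ℕ, |ψ n| ≤ 4 * s * n + ∑ k ∈ Finset.range n, h k := by
    intro n
    induction n with
    | zero => simp [h0]
    | succ n ih =>
      rw [Finset.sum_range_succ]; push_cast
      have := abs_add_le (ψ (n + 1) - ψ n) (ψ n)
      rw [sub_add_cancel] at this
      linarith [hle n]
  have hbad : ∀ m : ℕ, s ^ 2 * (if |ψ (m + 1)| ≤ 5 * s * ((m : ℝ) + 1) then (0 : ℝ) else 1)
      ≤ ((∑ k ∈ Finset.range (m + 1), h k) / ((m : ℝ) + 1)) ^ 2 := by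
    intro m
    split_ifs with hc
    · rw [mul_zero]; positivity
    · push Not at hc
      have h1 := hψ (m + 1)
      push_cast at h1
      have hm : (0 : ℝ) < (m : ℝ) + 1 := by positivity
      have h2 : s ≤ (∑ k ∈ Finset.range (m + 1), h k) / ((m : ℝ) + 1) := by
        rw [le_div_iff₀ hm]; linarith
      rw [mul_one]; exact pow_le_pow_left₀ hs.le h2 2
  have hq : ∀ m ∈ Finset.range M, s ^ 2 * h m ^ 2
      ≤ 12 * qd (s ^ 2) (ψ (m + 1) - ψ m) (ψ (m + 2) - ψ (m + 1)) := by
    intro m hm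
    simp only [hh]
    split_ifs with hc
    · rw [sq_abs]; exact hor_point hs (hd m (Finset.mem_range.1 hm)) hc
    · have := qd_nonneg (s ^ 2) (ψ (m + 1) - ψ m) (ψ (m + 2) - ψ (m + 1))
      nlinarith
  have a1 := Finset.sum_le_sum (s := Finset.range M) fun m _ => hbad m
  have a2 := hardy h M
  have a3 := Finset.sum_le_sum hq
  rw [← Finset.mul_sum] at a1
  rw [← Finset.mul_sum, ← Finset.mul_sum] at a3
  have a4 := mul_le_mul_of_nonneg_left (a1.trans a2) (sq_nonneg s)
  nlinarith

lemma tv_bound (g : ℕ → ℝ) (n k m : ℕ) (hk : k ≤ n) (hm : m ≤ n) :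
    |g k - g m| ≤ ∑ l ∈ Finset.range n, |g (l + 1) - g l| := by
  wlog h : k ≤ m generalizing k m
  · rw [abs_sub_comm]; exact this m k hm hk (by omega)
  have h1 := dist_le_Ico_sum_dist g h
  rw [Real.dist_eq] at h1
  refine h1.trans ?_
  have : ∀ l, dist (g l) (g (l + 1)) = |g (l + 1) - g l| := by
    intro l; rw [dist_comm, Real.dist_eq]
  simp only [this]
  apply Finset.sum_le_sum_of_subset_of_nonneg
  · intro l hl; simp only [Finset.mem_Ico, Finset.mem_range] at *; omega
  · intros; exact abs_nonneg _

lemma block_sign {s : ℝ} (hs : 0 < s) (hs1 : s ≤ 1 / 2) (d : ℕ → ℝ) (n : ℕ)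
    (hd : ∀ k ≤ n, |d k| ≤ 1)
    (hV1 : ∑ k ∈ Finset.range n, qd (s ^ 2) (d k) (d (k + 1)) < s ^ 3 / 1024)
    (hV2 : ∑ k ∈ Finset.range n, qd (s ^ 2) (d k) (d (k + 1)) < s ^ 4 * n) :
    (∀ k ≤ n, s / 2 < d k) ∨ (∀ k ≤ n, d k < -(s / 2)) := by
  obtain ⟨m, hmn, hm⟩ : ∃ m ≤ n, 3 / 4 * s < |d m| := by
    by_contra hcon
    push Not at hcon
    have : ∑ k ∈ Finset.range n, s ^ 4
        ≤ ∑ k ∈ Finset.range n, qd (s ^ 2) (d k) (d (k + 1)) := by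
      apply Finset.sum_le_sum
      intro k hk
      rw [Finset.mem_range] at hk
      have := qd_small (s := s) (a := d k) (b := d (k + 1))
        (by linarith [hcon k hk.le]) (by linarith [hcon (k + 1) hk])
      nlinarith [sq_nonneg (Real.sin (d (k + 1)) - Real.sin (d k))]
    rw [Finset.sum_const, Finset.card_range, nsmul_eq_mul] at this
    linarith
  have htv : ∑ l ∈ Finset.range n, |clampr (3 / 4 * s) (d (l + 1)) - clampr (3 / 4 * s) (d l)|
      < s / 4 := by
    have h1 : ∑ l ∈ Finset.range n,
        s ^ 2 * |clampr (3 / 4 * s) (d (l + 1)) - clampr (3 / 4 * s) (d l)|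
        ≤ ∑ l ∈ Finset.range n, 256 * qd (s ^ 2) (d l) (d (l + 1)) := by
      apply Finset.sum_le_sum
      intro k hk
      rw [Finset.mem_range] at hk
      exact ver_point hs hs1 (hd k hk.le) (hd (k + 1) hk)
    rw [← Finset.mul_sum, ← Finset.mul_sum] at h1
    have h2 : 0 < s ^ 2 := by positivity
    refine lt_of_mul_lt_mul_left ?_ h2.le
    nlinarith
  have hg : ∀ k ≤ n, |clampr (3 / 4 * s) (d k) - clampr (3 / 4 * s) (d m)| < s / 4 := by
    intro k hk
    exact lt_of_le_of_lt (tv_bound (fun l => clampr (3 / 4 * s) (d l)) n k m hk hmn) htv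
  rcases lt_abs.1 hm with h | h
  · left
    intro k hk
    have h1 := hg k hk
    have h2 : clampr (3 / 4 * s) (d m) = 3 / 4 * s := by
      unfold clampr; rw [min_eq_left h.le, max_eq_right (by linarith)]
    rw [h2, abs_lt] at h1
    by_contra hc
    push Not at hc
    have : clampr (3 / 4 * s) (d k) ≤ s / 2 := by
      unfold clampr; exact max_le (by linarith) ((min_le_right _ _).trans hc)
    linarith
  · right
    intro k hk
    have h1 := hg k hk
    have h2 : clampr (3 / 4 * s) (d m) = -(3 / 4 * s) := by
      unfold clampr; rw [min_eq_right (by linarith), max_eq_left (by linarith)]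
    rw [h2, abs_lt] at h1
    by_contra hc
    push Not at hc
    have : -(s / 2) ≤ clampr (3 / 4 * s) (d k) := by
      unfold clampr; exact le_max_of_le_right (le_min (by linarith) hc)
    linarith

lemma lin_growth {c : ℝ} (ψ : ℕ → ℝ) (n : ℕ) (h : ∀ k ≤ n, c ≤ ψ (k + 1) - ψ k)
    (k l : ℕ) (hkl : k ≤ l) (hl : l ≤ n + 1) : c * ((l : ℝ) - k) ≤ ψ l - ψ k := by
  induction l, hkl using Nat.le_induction with
  | base => simp
  | succ l hkl ih =>
    have := ih (by omega)
    have := h l (by omega)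
    push_cast; linarith

lemma block {s : ℝ} (hs : 0 < s) (hs1 : s ≤ 1 / 2) (ψ : ℕ → ℝ) (i : ℕ) (hi : 1 ≤ i)
    (hd : ∀ k, k + 1 < 64 * i → |ψ (k + 1) - ψ k| ≤ 1) :
    s ^ 4 * (i / (1 + s * i)) / 1024 ≤
      ∑ k ∈ Finset.range (64 * i - 2), qd (s ^ 2) (ψ (k + 1) - ψ k) (ψ (k + 2) - ψ (k + 1))
      + s ^ 4 * ∑ k ∈ Finset.range (64 * i),
        (if |ψ k| ≤ 5 * s * i then (0 : ℝ) else 1) := by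
  set V := ∑ k ∈ Finset.range (64 * i - 2),
    qd (s ^ 2) (ψ (k + 1) - ψ k) (ψ (k + 2) - ψ (k + 1)) with hV
  set B := ∑ k ∈ Finset.range (64 * i), (if |ψ k| ≤ 5 * s * i then (0 : ℝ) else 1) with hB
  have hi' : (1 : ℝ) ≤ i := by exact_mod_cast hi
  have hV0 : 0 ≤ V := Finset.sum_nonneg fun k _ => qd_nonneg _ _ _
  have hB0 : 0 ≤ B := Finset.sum_nonneg fun k _ => by split_ifs <;> norm_num
  have hs4 : 0 < s ^ 4 := by positivity
  have e1 : s ^ 4 * (i / (1 + s * i)) ≤ s ^ 3 := by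
    rw [← mul_div_assoc, div_le_iff₀ (by positivity)]
    have : 0 < s ^ 3 := by positivity
    nlinarith
  have e2 : s ^ 4 * (i / (1 + s * i)) ≤ s ^ 4 * i := by
    apply mul_le_mul_of_nonneg_left _ hs4.le
    apply div_le_self (by positivity)
    nlinarith
  have hsi : 0 < s ^ 4 * i := by positivity
  have hsB : 0 ≤ s ^ 4 * B := by positivity
  by_cases hV1 : V < s ^ 3 / 1024
  swap
  · push Not at hV1; linarith
  by_cases hV2 : V < s ^ 4 * ((64 * i - 2 : ℕ) : ℝ)
  swap
  · push Not at hV2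
    have : (i : ℝ) ≤ ((64 * i - 2 : ℕ) : ℝ) := by exact_mod_cast (by omega : i ≤ 64 * i - 2)
    nlinarith
  have hsg := block_sign hs hs1 (fun k => ψ (k + 1) - ψ k) (64 * i - 2)
    (fun k hk => hd k (by omega)) hV1 hV2
  have hsep : ∀ k l : ℕ, k ≤ l → l < 64 * i → s / 2 * ((l : ℝ) - k) ≤ |ψ l - ψ k| := by
    intro k l hkl hl
    rcases hsg with h | h
    · exact (lin_growth ψ (64 * i - 2) (fun k hk => (h k hk).le) k l hkl (by omega)).trans
        (le_abs_self _)
    · have := lin_growth (c := s / 2) (fun k => - ψ k) (64 * i - 2)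
        (fun k hk => by have := h k hk; linarith) k l hkl (by omega)
      refine le_trans ?_ (neg_le_abs _)
      linarith
  set Gd := (Finset.range (64 * i)).filter (fun k => |ψ k| ≤ 5 * s * i) with hGd
  have hcard : Gd.card ≤ 20 * i + 1 := by
    rcases Gd.eq_empty_or_nonempty with h | h
    · rw [h]; simp
    · set k := Gd.min' h with hk
      have hkG : k ∈ Gd := Finset.min'_mem _ _
      have hsub : Gd ⊆ Finset.Icc k (k + 20 * i) := by
        intro l hl
        have hkl : k ≤ l := Finset.min'_le _ _ hl
        rw [hGd, Finset.mem_filter, Finset.mem_range] at hl hkG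
        have h1 := hsep k l hkl hl.1
        have h2 := abs_sub (ψ l) (ψ k)
        have h3 : s / 2 * ((l : ℝ) - k) ≤ s / 2 * (20 * i) := by linarith [hl.2, hkG.2]
        have h4 := le_of_mul_le_mul_left h3 (by positivity)
        have h5 : (l : ℝ) ≤ ((k + 20 * i : ℕ) : ℝ) := by push_cast; linarith
        rw [Finset.mem_Icc]
        exact ⟨hkl, by exact_mod_cast h5⟩
      have := Finset.card_le_card hsub
      rw [Nat.card_Icc] at this; omega
  have hBeq : B + Gd.card = 64 * i := by
    have : (Gd.card : ℝ) = ∑ k ∈ Finset.range (64 * i),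
        (if |ψ k| ≤ 5 * s * i then (1 : ℝ) else 0) := by
      rw [hGd]; simp
    rw [this, hB, ← Finset.sum_add_distrib]
    have : ∀ k ∈ Finset.range (64 * i), ((if |ψ k| ≤ 5 * s * i then (0 : ℝ) else 1)
        + (if |ψ k| ≤ 5 * s * i then (1 : ℝ) else 0)) = 1 := by
      intro k _; split_ifs <;> norm_num
    rw [Finset.sum_congr rfl this]; simp
  have hc' : (Gd.card : ℝ) ≤ 20 * i + 1 := by exact_mod_cast hcard
  have hBi : (i : ℝ) ≤ B := by linarith
  nlinarith [mul_le_mul_of_nonneg_left hBi hs4.le]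

lemma sum_blocks (F : ℕ → ℝ) (L n : ℕ) (c : ℝ)
    (h : ∀ b < n, c ≤ ∑ k ∈ Finset.range L, F (b * L + k)) :
    n * c ≤ ∑ k ∈ Finset.range (n * L), F k := by
  induction n with
  | zero => simp
  | succ n ih =>
    rw [Nat.succ_mul, Finset.sum_range_add]
    have := ih (fun b hb => h b (by omega))
    have := h n (by omega)
    push_cast; linarith

lemma column {s : ℝ} (hs : 0 < s) (hs1 : s ≤ 1 / 2) (ψ : ℕ → ℝ) (i N : ℕ) (hi : 1 ≤ i)
    (hiN : 64 * i ≤ N) (hd : ∀ k < N, |ψ (k + 1) - ψ k| ≤ 1) :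
    s ^ 4 * ((N + 1 : ℝ) / (1 + s * i)) / (128 * 1024) ≤
      ∑ k ∈ Finset.range (N - 1), qd (s ^ 2) (ψ (k + 1) - ψ k) (ψ (k + 2) - ψ (k + 1))
      + s ^ 4 * ∑ k ∈ Finset.range (N + 1),
        (if |ψ k| ≤ 5 * s * i then (0 : ℝ) else 1) := by
  set f : ℕ → ℝ := fun k => if k < N - 1 then
    qd (s ^ 2) (ψ (k + 1) - ψ k) (ψ (k + 2) - ψ (k + 1)) else 0 with hf
  set g : ℕ → ℝ := fun k => if |ψ k| ≤ 5 * s * i then (0 : ℝ) else 1 with hg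
  have hf0 : ∀ k, 0 ≤ f k := by
    intro k; simp only [hf]; split_ifs
    · exact qd_nonneg _ _ _
    · exact le_rfl
  have hg0 : ∀ k, 0 ≤ g k := by intro k; simp only [hg]; split_ifs <;> norm_num
  have hs4 : 0 < s ^ 4 := by positivity
  set n := (N + 1) / (64 * i) with hn
  have hL : 0 < 64 * i := by omega
  have hnL : n * (64 * i) ≤ N + 1 := Nat.div_mul_le_self _ _
  have hn1 : 1 ≤ n := by rw [hn, Nat.le_div_iff_mul_le hL]; omega
  have hn2 : N + 1 ≤ 2 * (n * (64 * i)) := by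
    have := Nat.lt_div_mul_add (a := N + 1) hL
    rw [← hn] at this
    nlinarith
  have hblk := sum_blocks (fun k => f k + s ^ 4 * g k) (64 * i) n
    (s ^ 4 * (i / (1 + s * i)) / 1024) (by
      intro b hb
      have hb' : b * (64 * i) + 64 * i ≤ N + 1 := by nlinarith
      have h1 := block hs hs1 (fun k => ψ (b * (64 * i) + k)) i hi
        (fun k hk => hd (b * (64 * i) + k) (by omega))
      refine h1.trans ?_
      rw [Finset.sum_add_distrib, ← Finset.mul_sum]
      refine add_le_add ?_ le_rfl
      have h2 : ∑ k ∈ Finset.range (64 * i - 2), f (b * (64 * i) + k)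
          ≤ ∑ k ∈ Finset.range (64 * i), f (b * (64 * i) + k) := by
        apply Finset.sum_le_sum_of_subset_of_nonneg
        · intro l hl; simp only [Finset.mem_range] at *; omega
        · intros; exact hf0 _
      refine le_trans (le_of_eq ?_) h2
      apply Finset.sum_congr rfl
      intro k hk
      rw [Finset.mem_range] at hk
      simp only [hf]
      have hlt : b * (64 * i) + k < N - 1 := by omega
      rw [if_pos hlt]
      rfl)
  have hfin : ∑ k ∈ Finset.range (n * (64 * i)), (f k + s ^ 4 * g k)
      ≤ ∑ k ∈ Finset.range (N + 1), (f k + s ^ 4 * g k) := by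
    apply Finset.sum_le_sum_of_subset_of_nonneg
    · intro l hl; simp only [Finset.mem_range] at *; omega
    · intro k _ _
      have := hf0 k
      have := hg0 k
      positivity
  rw [Finset.sum_add_distrib (s := Finset.range (N + 1)), ← Finset.mul_sum] at hfin
  have hfe : ∑ k ∈ Finset.range (N + 1), f k = ∑ k ∈ Finset.range (N - 1),
      qd (s ^ 2) (ψ (k + 1) - ψ k) (ψ (k + 2) - ψ (k + 1)) := by
    have : ∑ k ∈ Finset.range (N - 1), f k = ∑ k ∈ Finset.range (N + 1), f k := by
      apply Finset.sum_subset
      · intro l hl; simp only [Finset.mem_range] at *; omega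
      · intro k _ hk
        rw [Finset.mem_range] at hk
        simp only [hf]; rw [if_neg hk]
    rw [← this]
    apply Finset.sum_congr rfl
    intro k hk
    rw [Finset.mem_range] at hk
    simp only [hf]; rw [if_pos hk]
  rw [hfe] at hfin
  refine le_trans ?_ (hblk.trans hfin)
  have hn2' : (N + 1 : ℝ) ≤ 2 * (n * (64 * i)) := by exact_mod_cast hn2
  have hpos : 0 < 1 + s * i := by positivity
  have : (n : ℝ) * (s ^ 4 * (i / (1 + s * i)) / 1024)
      = s ^ 4 * ((2 * (n * (64 * i))) / (1 + s * i)) / (128 * 1024) := by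
    field_simp; ring
  rw [this]
  gcongr

lemma log_sum {s : ℝ} (hs : 0 < s) (M : ℕ) :
    Real.log (1 + s * (M + 1)) - Real.log (1 + s)
      ≤ s * ∑ m ∈ Finset.range M, 1 / (1 + s * ((m : ℝ) + 1)) := by
  induction M with
  | zero => simp
  | succ m ih =>
    rw [Finset.sum_range_succ]
    push_cast
    have hp : 0 < 1 + s * ((m : ℝ) + 1) := by positivity
    have hp2 : 0 < 1 + s * ((m : ℝ) + 1 + 1) := by positivity
    have h1 := Real.log_le_sub_one_of_pos (div_pos hp2 hp)
    rw [Real.log_div hp2.ne' hp.ne'] at h1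
    have h2 : (1 + s * ((m : ℝ) + 1 + 1)) / (1 + s * ((m : ℝ) + 1)) - 1
        = s * (1 / (1 + s * ((m : ℝ) + 1))) := by field_simp; ring
    linarith

lemma core {s : ℝ} (hs : 0 < s) (hs1 : s ≤ 1 / 2) (φ : ℕ → ℕ → ℝ) (N : ℕ) (hN : 64 ≤ N)
    (h0 : ∀ j ≤ N, φ 0 j = 0)
    (hh : ∀ i < N, ∀ j ≤ N, |φ (i + 1) j - φ i j| ≤ 1)
    (hv : ∀ i ≤ N, ∀ j < N, |φ i (j + 1) - φ i j| ≤ 1) :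
    s ^ 3 * (N + 1) * Real.log (1 + s * (N + 1) / 256) / (48 * 128 * 1024) ≤
      ∑ j ∈ Finset.range (N + 1), ∑ i ∈ Finset.range (N - 1),
        qd (s ^ 2) (φ (i + 1) j - φ i j) (φ (i + 2) j - φ (i + 1) j)
      + ∑ i ∈ Finset.range (N + 1), ∑ j ∈ Finset.range (N - 1),
        qd (s ^ 2) (φ i (j + 1) - φ i j) (φ i (j + 2) - φ i (j + 1)) := by
  set M := N / 64 with hM
  have hMN : M + 1 ≤ N := by omega
  have hM2 : N + 1 ≤ 128 * M := by omega
  set bad : ℕ → ℕ → ℝ := fun m j =>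
    if |φ (m + 1) j| ≤ 5 * s * ((m : ℝ) + 1) then (0 : ℝ) else 1 with hbad
  have hrow : s ^ 4 * ∑ j ∈ Finset.range (N + 1), ∑ m ∈ Finset.range M, bad m j
      ≤ 48 * ∑ j ∈ Finset.range (N + 1), ∑ i ∈ Finset.range (N - 1),
        qd (s ^ 2) (φ (i + 1) j - φ i j) (φ (i + 2) j - φ (i + 1) j) := by
    rw [Finset.mul_sum, Finset.mul_sum]
    apply Finset.sum_le_sum
    intro j hj
    rw [Finset.mem_range] at hj
    refine (row_bad hs (fun i => φ i j) M (h0 j (by omega))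
      (fun k hk => hh k (by omega) j (by omega))).trans ?_
    apply mul_le_mul_of_nonneg_left _ (by norm_num)
    apply Finset.sum_le_sum_of_subset_of_nonneg
    · intro l hl; simp only [Finset.mem_range] at *; omega
    · intros; exact qd_nonneg _ _ _
  have hcol : ∑ m ∈ Finset.range M, s ^ 4 * ((N + 1 : ℝ) / (1 + s * ((m : ℝ) + 1))) / (128 * 1024)
      ≤ ∑ m ∈ Finset.range M, (∑ j ∈ Finset.range (N - 1),
        qd (s ^ 2) (φ (m + 1) (j + 1) - φ (m + 1) j) (φ (m + 1) (j + 2) - φ (m + 1) (j + 1))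
        + s ^ 4 * ∑ j ∈ Finset.range (N + 1), bad m j) := by
    apply Finset.sum_le_sum
    intro m hm
    rw [Finset.mem_range] at hm
    have := column hs hs1 (fun j => φ (m + 1) j) (m + 1) N (by omega) (by omega)
      (fun k hk => hv (m + 1) (by omega) k hk)
    push_cast at this
    exact this
  rw [Finset.sum_add_distrib, ← Finset.mul_sum, Finset.sum_comm (s := Finset.range M)
    (t := Finset.range (N + 1))] at hcol
  have hver : ∑ m ∈ Finset.range M, ∑ j ∈ Finset.range (N - 1),
        qd (s ^ 2) (φ (m + 1) (j + 1) - φ (m + 1) j) (φ (m + 1) (j + 2) - φ (m + 1) (j + 1))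
      ≤ ∑ i ∈ Finset.range (N + 1), ∑ j ∈ Finset.range (N - 1),
        qd (s ^ 2) (φ i (j + 1) - φ i j) (φ i (j + 2) - φ i (j + 1)) := by
    rw [Finset.sum_range_succ' _ N]
    have : 0 ≤ ∑ j ∈ Finset.range (N - 1),
        qd (s ^ 2) (φ 0 (j + 1) - φ 0 j) (φ 0 (j + 2) - φ 0 (j + 1)) :=
      Finset.sum_nonneg fun _ _ => qd_nonneg _ _ _
    refine le_trans ?_ (le_add_of_nonneg_right this)
    apply Finset.sum_le_sum_of_subset_of_nonneg
    · intro l hl; simp only [Finset.mem_range] at *; omega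
    · intros; exact Finset.sum_nonneg fun _ _ => qd_nonneg _ _ _
  have hver0 : 0 ≤ ∑ i ∈ Finset.range (N + 1), ∑ j ∈ Finset.range (N - 1),
        qd (s ^ 2) (φ i (j + 1) - φ i j) (φ i (j + 2) - φ i (j + 1)) :=
    Finset.sum_nonneg fun _ _ => Finset.sum_nonneg fun _ _ => qd_nonneg _ _ _
  have hlog := log_sum hs M
  have hlog2 : Real.log (1 + s * (N + 1) / 256)
      ≤ Real.log (1 + s * (M + 1)) - Real.log (1 + s) := by
    rw [← Real.log_div (by positivity) (by positivity)]
    apply Real.log_le_log (by positivity)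
    rw [le_div_iff₀ (by positivity)]
    have hM2' : (N + 1 : ℝ) ≤ 128 * M := by exact_mod_cast hM2
    have : s * (N + 1) ≤ s * (128 * M) := by gcongr
    have h3 : 0 ≤ s * (N + 1) := by positivity
    nlinarith
  have hsum : ∑ m ∈ Finset.range M, s ^ 4 * ((N + 1 : ℝ) / (1 + s * ((m : ℝ) + 1))) / (128 * 1024)
      = s ^ 3 * (N + 1) / (128 * 1024) *
        (s * ∑ m ∈ Finset.range M, 1 / (1 + s * ((m : ℝ) + 1))) := by
    rw [Finset.mul_sum, Finset.mul_sum]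
    apply Finset.sum_congr rfl
    intro m _
    ring
  rw [hsum] at hcol
  have hfac : 0 ≤ s ^ 3 * (N + 1) / (128 * 1024) := by positivity
  have := mul_le_mul_of_nonneg_left (hlog2.trans hlog) hfac
  have e : s ^ 3 * (N + 1) * Real.log (1 + s * (N + 1) / 256) / (48 * 128 * 1024)
      = (s ^ 3 * (N + 1) / (128 * 1024) * Real.log (1 + s * (N + 1) / 256)) / 48 := by ring
  rw [e]
  linarith

lemma abs_le_one_of_cos {x : ℝ} (hx : |x| ≤ Real.pi) (hc : 3 / 5 ≤ Real.cos x) : |x| ≤ 1 := by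
  by_contra h
  push Not at h
  have h1 := Real.cos_lt_cos_of_nonneg_of_le_pi (by norm_num) hx h
  rw [Real.cos_abs] at h1
  linarith [Real.cos_one_le]

lemma exists_lift {a b : ℝ × ℝ} {α : ℝ} (ha : a = (-Real.sin α, Real.cos α))
    (hb : sqnorm b = 1) (hd : 3 / 5 ≤ dotp a b) :
    ∃ β : ℝ, b = (-Real.sin β, Real.cos β) ∧ |β - α| ≤ 1 := by
  subst ha
  obtain ⟨x, y⟩ := b
  simp only [sqnorm, dotp] at hb hd
  set c := -Real.sin α * x + Real.cos α * y with hc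
  set e := -Real.sin α * y - Real.cos α * x with he
  have hsc := Real.sin_sq_add_cos_sq α
  have hce : c ^ 2 + e ^ 2 = 1 := by
    have : c ^ 2 + e ^ 2 = (Real.sin α ^ 2 + Real.cos α ^ 2) * (x ^ 2 + y ^ 2) := by
      rw [hc, he]; ring
    rw [this, hsc, hb, one_mul]
  set z : ℂ := ⟨c, e⟩ with hz
  have hnz : ‖z‖ = 1 := by
    have : ‖z‖ ^ 2 = 1 := by
      rw [Complex.sq_norm, Complex.normSq_mk]; linarith
    have h0 := norm_nonneg z
    nlinarith
  have hz0 : z ≠ 0 := by intro h; rw [h, norm_zero] at hnz; norm_num at hnz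
  have hcos : Real.cos z.arg = c := by rw [Complex.cos_arg hz0, hnz, div_one]
  have hsin : Real.sin z.arg = e := by rw [Complex.sin_arg, hnz, div_one]
  refine ⟨α + z.arg, ?_, ?_⟩
  · rw [Real.sin_add, Real.cos_add, hcos, hsin, hc, he]
    ext
    · dsimp only; linear_combination (-x) * hsc
    · dsimp only; linear_combination (-y) * hsc
  · rw [add_sub_cancel_left]
    exact abs_le_one_of_cos (Complex.abs_arg_le_pi z) (by rw [hcos]; exact hd)

lemma sqnorm_triple (δ α β γ : ℝ) :
    sqnorm ((-Real.sin α, Real.cos α) - (2 * (1 - δ)) • ((-Real.sin β, Real.cos β) : ℝ × ℝ)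
      + (-Real.sin γ, Real.cos γ)) = qd δ (β - α) (γ - β) := by
  simp only [sqnorm, qd, Real.cos_sub, Real.sin_sub, Prod.fst_add, Prod.fst_sub, Prod.snd_add,
    Prod.snd_sub, Prod.smul_fst, Prod.smul_snd, smul_eq_mul]
  have h1 := Real.sin_sq_add_cos_sq α
  have h2 := Real.sin_sq_add_cos_sq β
  have h3 := Real.sin_sq_add_cos_sq γ
  generalize Real.sin α = s1 at *
  generalize Real.cos α = c1 at *
  generalize Real.sin β = s2 at *
  generalize Real.cos β = c2 at *
  generalize Real.sin γ = s3 at *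
  generalize Real.cos γ = c3 at *
  have e : (c2 * c1 + s2 * s1 + (c3 * c2 + s3 * s2) - 2 * (1 - δ)) ^ 2
      + (s3 * c2 - c3 * s2 - (s2 * c1 - c2 * s1)) ^ 2
      = ((c1 + c3) ^ 2 + (s1 + s3) ^ 2) * (s2 ^ 2 + c2 ^ 2)
        - 4 * (1 - δ) * (c2 * c1 + s2 * s1 + (c3 * c2 + s3 * s2)) + 4 * (1 - δ) ^ 2 := by
    ring
  rw [e, h2]
  linear_combination (4 * (1 - δ) ^ 2) * h2

lemma dot_of_small {a b c : ℝ × ℝ} {δ : ℝ} (hδ : δ ≤ 1 / 100) (ha : sqnorm a = 1)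
    (hb : sqnorm b = 1) (hc : sqnorm c = 1)
    (h : sqnorm (a - (2 * (1 - δ)) • b + c) < 1 / 100) :
    3 / 5 ≤ dotp a b ∧ 3 / 5 ≤ dotp b c := by
  obtain ⟨a1, a2⟩ := a
  obtain ⟨b1, b2⟩ := b
  obtain ⟨c1, c2⟩ := c
  simp only [sqnorm, dotp, Prod.fst_add, Prod.fst_sub, Prod.snd_add,
    Prod.snd_sub, Prod.smul_fst, Prod.smul_snd, smul_eq_mul] at *
  set x := a1 - 2 * (1 - δ) * b1 + c1 with hx
  set y := a2 - 2 * (1 - δ) * b2 + c2 with hy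
  have h1 : (x * b1 + y * b2) ^ 2 ≤ (x ^ 2 + y ^ 2) := by
    have : (x ^ 2 + y ^ 2) * (b1 ^ 2 + b2 ^ 2) = (x * b1 + y * b2) ^ 2 + (x * b2 - y * b1) ^ 2 := by
      ring
    rw [hb, mul_one] at this
    nlinarith [sq_nonneg (x * b2 - y * b1)]
  have h2 : -(1 / 10) ≤ x * b1 + y * b2 := by
    by_contra hcon
    push Not at hcon
    nlinarith
  have h3 : x * b1 + y * b2
      = (a1 * b1 + a2 * b2) + (b1 * c1 + b2 * c2) - 2 * (1 - δ) * (b1 ^ 2 + b2 ^ 2) := by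
    rw [hx, hy]; ring
  rw [hb] at h3
  have h4 : a1 * b1 + a2 * b2 ≤ 1 := by nlinarith [sq_nonneg (a1 - b1), sq_nonneg (a2 - b2)]
  have h5 : b1 * c1 + b2 * c2 ≤ 1 := by nlinarith [sq_nonneg (b1 - c1), sq_nonneg (b2 - c2)]
  constructor <;> linarith

lemma dotp_angle (α β : ℝ) : dotp (-Real.sin α, Real.cos α) (-Real.sin β, Real.cos β)
    = Real.cos (β - α) := by
  simp only [dotp, Real.cos_sub]; ring

lemma exists_row (v : ℕ → ℝ × ℝ) (N : ℕ) (h0 : v 0 = (0, 1)) (hs : ∀ i ≤ N, sqnorm (v i) = 1)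
    (hd : ∀ i < N, 3 / 5 ≤ dotp (v i) (v (i + 1))) :
    ∃ φ : ℕ → ℝ, φ 0 = 0 ∧ (∀ i ≤ N, v i = (-Real.sin (φ i), Real.cos (φ i))) ∧
      ∀ i < N, |φ (i + 1) - φ i| ≤ 1 := by
  induction N with
  | zero =>
    refine ⟨fun _ => 0, rfl, ?_, ?_⟩
    · intro i hi
      have : i = 0 := by omega
      subst this; rw [h0]; simp
    · intro i hi; omega
  | succ N ih =>
    obtain ⟨φ, p0, p1, p2⟩ := ih (fun i hi => hs i (by omega)) (fun i hi => hd i (by omega))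
    obtain ⟨β, hβ, hβ2⟩ := exists_lift (p1 N le_rfl) (hs (N + 1) le_rfl) (hd N (by omega))
    refine ⟨fun i => if i ≤ N then φ i else β, ?_, ?_, ?_⟩
    · simp [p0]
    · intro i hi
      dsimp only
      split_ifs with h
      · exact p1 i h
      · have : i = N + 1 := by omega
        rw [this]; exact hβ
    · intro i hi
      dsimp only
      by_cases h : i + 1 ≤ N
      · rw [if_pos h, if_pos (by omega)]; exact p2 i (by omega)
      · have : i = N := by omega
        subst this
        rw [if_neg h, if_pos le_rfl]; exact hβ2

/-- Discrete statement over natural indices. -/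
lemma nat_bound {s : ℝ} (hs : 0 < s) (hs1 : s ≤ 1 / 10) (v : ℕ → ℕ → ℝ × ℝ) (N : ℕ)
    (hN : 64 ≤ N) (h0 : ∀ j ≤ N, v 0 j = (0, 1)) (hsp : ∀ i ≤ N, ∀ j ≤ N, sqnorm (v i j) = 1)
    (hH : ∀ i < N - 1, ∀ j ≤ N,
      sqnorm (v i j - (2 * (1 - s ^ 2)) • v (i + 1) j + v (i + 2) j) < 1 / 100)
    (hV : ∀ i ≤ N, ∀ j < N - 1,
      sqnorm (v i j - (2 * (1 - s ^ 2)) • v i (j + 1) + v i (j + 2)) < 1 / 100) :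
    s ^ 3 * (N + 1) * Real.log (1 + s * (N + 1) / 256) / (48 * 128 * 1024) ≤
      ∑ j ∈ Finset.range (N + 1), ∑ i ∈ Finset.range (N - 1),
        sqnorm (v i j - (2 * (1 - s ^ 2)) • v (i + 1) j + v (i + 2) j)
      + ∑ i ∈ Finset.range (N + 1), ∑ j ∈ Finset.range (N - 1),
        sqnorm (v i j - (2 * (1 - s ^ 2)) • v i (j + 1) + v i (j + 2)) := by
  have hδ : s ^ 2 ≤ 1 / 100 := by nlinarith
  have dH : ∀ i < N, ∀ j ≤ N, 3 / 5 ≤ dotp (v i j) (v (i + 1) j) := by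
    intro i hi j hj
    by_cases h : i < N - 1
    · exact (dot_of_small hδ (hsp i (by omega) j hj) (hsp _ (by omega) j hj)
        (hsp _ (by omega) j hj) (hH i h j hj)).1
    · obtain ⟨k, rfl⟩ : ∃ k, i = k + 1 := ⟨i - 1, by omega⟩
      exact (dot_of_small hδ (hsp k (by omega) j hj) (hsp _ (by omega) j hj)
        (hsp _ (by omega) j hj) (hH k (by omega) j hj)).2
  have dV : ∀ i ≤ N, ∀ j < N, 3 / 5 ≤ dotp (v i j) (v i (j + 1)) := by
    intro i hi j hj
    by_cases h : j < N - 1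
    · exact (dot_of_small hδ (hsp i hi j (by omega)) (hsp i hi _ (by omega))
        (hsp i hi _ (by omega)) (hV i hi j h)).1
    · obtain ⟨k, rfl⟩ : ∃ k, j = k + 1 := ⟨j - 1, by omega⟩
      exact (dot_of_small hδ (hsp i hi k (by omega)) (hsp i hi _ (by omega))
        (hsp i hi _ (by omega)) (hV i hi k (by omega))).2
  have hex : ∀ j : ℕ, ∃ φ : ℕ → ℝ, j ≤ N → (φ 0 = 0 ∧
      (∀ i ≤ N, v i j = (-Real.sin (φ i), Real.cos (φ i))) ∧
      ∀ i < N, |φ (i + 1) - φ i| ≤ 1) := by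
    intro j
    by_cases hj : j ≤ N
    · obtain ⟨φ, h⟩ := exists_row (fun i => v i j) N (h0 j hj) (fun i hi => hsp i hi j hj)
        (fun i hi => dH i hi j hj)
      exact ⟨φ, fun _ => h⟩
    · exact ⟨fun _ => 0, fun h => absurd h hj⟩
  choose φ hφ using hex
  have hv : ∀ i ≤ N, ∀ j < N, |φ (j + 1) i - φ j i| ≤ 1 := by
    intro i
    induction i with
    | zero =>
      intro _ j hj
      rw [(hφ j (by omega)).1, (hφ (j + 1) (by omega)).1]; norm_num
    | succ i ih =>
      intro hi j hj
      have h1 := ih (by omega) j hj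
      have h2 := (hφ j (by omega)).2.2 i (by omega)
      have h3 := (hφ (j + 1) (by omega)).2.2 i (by omega)
      apply abs_le_one_of_cos
      · have := Real.pi_gt_three
        rw [abs_le] at *
        constructor <;> linarith [h1.1, h1.2, h2.1, h2.2, h3.1, h3.2]
      · have := dV (i + 1) hi j hj
        rwa [(hφ j (by omega)).2.1 _ hi, (hφ (j + 1) (by omega)).2.1 _ hi, dotp_angle] at this
  have hc := core hs (by linarith) (fun i j => φ j i) N hN (fun j hj => (hφ j hj).1)
    (fun i hi j hj => (hφ j hj).2.2 i hi) hv
  refine hc.trans (le_of_eq ?_)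
  congr 1
  · apply Finset.sum_congr rfl
    intro j hj
    apply Finset.sum_congr rfl
    intro i hi
    rw [Finset.mem_range] at hi hj
    rw [(hφ j (by omega)).2.1 i (by omega), (hφ j (by omega)).2.1 (i + 1) (by omega),
      (hφ j (by omega)).2.1 (i + 2) (by omega), sqnorm_triple]
  · apply Finset.sum_congr rfl
    intro i hi
    apply Finset.sum_congr rfl
    intro j hj
    rw [Finset.mem_range] at hi hj
    rw [(hφ j (by omega)).2.1 i (by omega), (hφ (j + 1) (by omega)).2.1 i (by omega),
      (hφ (j + 2) (by omega)).2.1 i (by omega), sqnorm_triple]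

lemma sum_Icc_int (F : ℤ → ℝ) (n : ℕ) :
    ∑ k ∈ Finset.Icc (0 : ℤ) ((n : ℤ) - 1), F k = ∑ k ∈ Finset.range n, F (k : ℤ) := by
  symm
  apply Finset.sum_bij (fun (k : ℕ) _ => (k : ℤ))
  · intro k hk; rw [Finset.mem_range] at hk; rw [Finset.mem_Icc]; omega
  · intro a _ b _ h; exact_mod_cast h
  · intro k hk
    rw [Finset.mem_Icc] at hk
    exact ⟨k.toNat, by rw [Finset.mem_range]; omega, by omega⟩
  · intros; rfl

lemma final_ineq {s ε : ℝ} (hs : 0 < s) (hε : 0 < ε) :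
    min ((s ^ 2) ^ 2) (ε * (s ^ 2 * s) * (|Real.log (ε / s)| + 1)) / 768
      ≤ ε * s ^ 3 * Real.log (1 + s / ε / 256) := by
  set y := s / ε with hy
  have hy0 : 0 < y := by positivity
  have hlog : Real.log (ε / s) = - Real.log y := by
    rw [hy, ← Real.log_inv, inv_div]
  rw [hlog, abs_neg]
  have hc : 0 < ε * s ^ 3 := by positivity
  have hB : Real.log (1 + y) / 256 ≤ Real.log (1 + y / 256) := by
    have h1 := one_add_mul_le_pow (a := y / 256) (by linarith [div_pos hy0 (by norm_num : (0:ℝ) < 256)]) 256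
    have h2 : 1 + y ≤ (1 + y / 256) ^ 256 := by
      refine le_trans (le_of_eq ?_) h1; push_cast; ring
    have h3 := Real.log_le_log (by positivity) h2
    rw [Real.log_pow] at h3
    push_cast at h3; linarith
  have hmain : min ((s ^ 2) ^ 2) (ε * (s ^ 2 * s) * (|Real.log y| + 1))
      ≤ ε * s ^ 3 * (3 * Real.log (1 + y)) := by
    rcases le_total y 1 with h | h
    · refine (min_le_left _ _).trans ?_
      have h1 := Real.one_sub_inv_le_log_of_pos (x := 1 + y) (by positivity)
      have h2 : y / 2 ≤ 1 - (1 + y)⁻¹ := by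
        have : 1 - (1 + y)⁻¹ = y / (1 + y) := by field_simp; ring
        rw [this]; gcongr; linarith
      have h3 : (s ^ 2) ^ 2 = ε * s ^ 3 * y := by rw [hy]; field_simp
      rw [h3]
      apply mul_le_mul_of_nonneg_left _ hc.le
      linarith
    · refine (min_le_right _ _).trans ?_
      have h1 : ε * (s ^ 2 * s) = ε * s ^ 3 := by ring
      rw [h1]
      apply mul_le_mul_of_nonneg_left _ hc.le
      rw [abs_of_nonneg (Real.log_nonneg h)]
      have h2 := Real.log_le_log hy0 (by linarith : y ≤ 1 + y)
      have h3 := Real.log_le_log (by norm_num) (by linarith : (2 : ℝ) ≤ 1 + y)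
      linarith [Real.log_two_gt_d9]
  have := mul_le_mul_of_nonneg_left hB hc.le
  linarith

lemma E_eq (ε δ : ℝ) (u : ℤ × ℤ → ℝ × ℝ) (N : ℕ) (hN : 1 ≤ N) (hK : Kof ε = N) :
    E ε δ u = ε ^ 2 / 2 * (∑ j ∈ Finset.range (N + 1), ∑ i ∈ Finset.range (N - 1),
        sqnorm (u ((i : ℕ), (j : ℕ)) - (2 * (1 - δ)) • u (((i + 1 : ℕ) : ℤ), (j : ℕ))
          + u (((i + 2 : ℕ) : ℤ), (j : ℕ)))
      + ∑ i ∈ Finset.range (N + 1), ∑ j ∈ Finset.range (N - 1),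
        sqnorm (u ((i : ℕ), (j : ℕ)) - (2 * (1 - δ)) • u ((i : ℕ), ((j + 1 : ℕ) : ℤ))
          + u ((i : ℕ), ((j + 2 : ℕ) : ℤ)))) := by
  have e1 : Kof ε = ((N + 1 : ℕ) : ℤ) - 1 := by rw [hK]; push_cast; ring
  have e2 : Kof ε - 2 = ((N - 1 : ℕ) : ℤ) - 1 := by rw [hK]; omega
  unfold E Ehor Ever IdxH IdxV
  rw [e2, e1, Finset.sum_product_right, Finset.sum_product, sum_Icc_int, sum_Icc_int, mul_add]
  simp only [sum_Icc_int]
  push_cast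
  rfl

/-- Lemma 5.9: lower bound for small `δ`, with `η = 1/(2·4·12²·256)`. -/
theorem lower_bound_small_delta :
    ∃ cl : ℝ, 0 < cl ∧ ∀ ε δ : ℝ,
      δ ∈ Set.Ioo (0 : ℝ) ((1 / (2 * 4 * 12 ^ 2 * 256)) ^ 2 / 16) →
      ε ∈ Set.Ioo (0 : ℝ) ((1 / (2 * 4 * 12 ^ 2 * 256)) / 4) →
      δ ≤ ε →
      ∀ u : ℤ × ℤ → ℝ × ℝ, InS0 ε u →
        cl * min (δ ^ 2) (ε * (δ * Real.sqrt δ) * (|Real.log (ε / Real.sqrt δ)| + 1))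
          ≤ E ε δ u := by
  refine ⟨1 / (2 * 48 * 128 * 1024 * 768), by norm_num, ?_⟩
  intro ε δ hδ hε hδε u hu
  have hδ0 := hδ.1
  have hε0 := hε.1
  have hδ1 : δ ≤ 1 / 10000 := hδ.2.le.trans (by norm_num)
  have hε1 : ε ≤ 1 / 100 := hε.2.le.trans (by norm_num)
  have hceil := Int.le_ceil (1 / ε)
  have hinv : 100 ≤ 1 / ε := by rw [le_div_iff₀ hε0]; linarith
  have hK64 : 64 ≤ Kof ε := by
    have : (100 : ℝ) ≤ (⌈1 / ε⌉ : ℤ) := hinv.trans hceil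
    have : (100 : ℤ) ≤ ⌈1 / ε⌉ := by exact_mod_cast this
    unfold Kof; omega
  obtain ⟨N, hN⟩ : ∃ N : ℕ, Kof ε = N := ⟨(Kof ε).toNat, by omega⟩
  have hN64 : 64 ≤ N := by omega
  have hN1 : 1 / ε ≤ (N : ℝ) + 1 := by
    have : (⌈1 / ε⌉ : ℤ) = (N : ℤ) + 1 := by unfold Kof at hN; omega
    rw [this] at hceil; push_cast at hceil; exact hceil
  set s := Real.sqrt δ with hs
  have hs0 : 0 < s := Real.sqrt_pos.2 hδ0
  have hsq : s ^ 2 = δ := Real.sq_sqrt hδ0.le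
  have hs1 : s ≤ 1 / 10 := by nlinarith
  rw [E_eq ε δ u N (by omega) hN]
  have hmem : ∀ i ≤ N, ∀ j ≤ N, sqnorm (u ((i : ℕ), (j : ℕ))) = 1 := by
    intro i hi j hj
    apply hu.1
    unfold Idx
    rw [Finset.mem_product, Finset.mem_Icc, Finset.mem_Icc, hN]
    dsimp only
    omega
  have hbd : ∀ j ≤ N, u ((0 : ℕ), (j : ℕ)) = (0, 1) := by
    intro j hj
    apply hu.2
    rw [Finset.mem_Icc, hN]; omega
  set v : ℕ → ℕ → ℝ × ℝ := fun i j => u ((i : ℕ), (j : ℕ)) with hv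
  set SH := ∑ j ∈ Finset.range (N + 1), ∑ i ∈ Finset.range (N - 1),
        sqnorm (v i j - (2 * (1 - δ)) • v (i + 1) j + v (i + 2) j) with hSH
  set SV := ∑ i ∈ Finset.range (N + 1), ∑ j ∈ Finset.range (N - 1),
        sqnorm (v i j - (2 * (1 - δ)) • v i (j + 1) + v i (j + 2)) with hSV
  change _ ≤ ε ^ 2 / 2 * (SH + SV)
  have hnn : ∀ w : ℝ × ℝ, 0 ≤ sqnorm w := fun w => by unfold sqnorm; positivity
  have hSH0 : 0 ≤ SH := Finset.sum_nonneg fun _ _ => Finset.sum_nonneg fun _ _ => hnn _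
  have hSV0 : 0 ≤ SV := Finset.sum_nonneg fun _ _ => Finset.sum_nonneg fun _ _ => hnn _
  have hε2 : 0 < ε ^ 2 := by positivity
  -- large local energy
  have hbig : 1 / 100 ≤ SH + SV → 1 / (2 * 48 * 128 * 1024 * 768) *
      min (δ ^ 2) (ε * (δ * s) * (|Real.log (ε / s)| + 1)) ≤ ε ^ 2 / 2 * (SH + SV) := by
    intro h
    have h1 := min_le_left (δ ^ 2) (ε * (δ * s) * (|Real.log (ε / s)| + 1))
    have h2 : δ ^ 2 ≤ ε ^ 2 := pow_le_pow_left₀ hδ0.le hδε 2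
    nlinarith
  by_cases hH : ∀ i < N - 1, ∀ j ≤ N,
      sqnorm (v i j - (2 * (1 - δ)) • v (i + 1) j + v (i + 2) j) < 1 / 100
  swap
  · push Not at hH
    obtain ⟨i, hi, j, hj, h⟩ := hH
    apply hbig
    have h1 := Finset.single_le_sum (f := fun i =>
        sqnorm (v i j - (2 * (1 - δ)) • v (i + 1) j + v (i + 2) j))
      (fun _ _ => hnn _) (Finset.mem_range.2 hi)
    have h2 := Finset.single_le_sum (f := fun j => ∑ i ∈ Finset.range (N - 1),
        sqnorm (v i j - (2 * (1 - δ)) • v (i + 1) j + v (i + 2) j))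
      (fun _ _ => Finset.sum_nonneg fun _ _ => hnn _)
      (Finset.mem_range.2 (by omega : j < N + 1))
    linarith
  by_cases hV : ∀ i ≤ N, ∀ j < N - 1,
      sqnorm (v i j - (2 * (1 - δ)) • v i (j + 1) + v i (j + 2)) < 1 / 100
  swap
  · push Not at hV
    obtain ⟨i, hi, j, hj, h⟩ := hV
    apply hbig
    have h1 := Finset.single_le_sum (f := fun j =>
        sqnorm (v i j - (2 * (1 - δ)) • v i (j + 1) + v i (j + 2)))
      (fun _ _ => hnn _) (Finset.mem_range.2 hj)
    have h2 := Finset.single_le_sum (f := fun i => ∑ j ∈ Finset.range (N - 1),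
        sqnorm (v i j - (2 * (1 - δ)) • v i (j + 1) + v i (j + 2)))
      (fun _ _ => Finset.sum_nonneg fun _ _ => hnn _)
      (Finset.mem_range.2 (by omega : i < N + 1))
    linarith
  rw [← hsq] at hH hV
  have hmain := nat_bound hs0 hs1 v N hN64 hbd hmem hH hV
  rw [hsq] at hmain
  change _ ≤ SH + SV at hmain
  have hfin := final_ineq (s := s) (ε := ε) hs0 hε0
  rw [hsq] at hfin
  have hlogle : Real.log (1 + s / ε / 256) ≤ Real.log (1 + s * (N + 1) / 256) := by
    apply Real.log_le_log (by positivity)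
    have : s / ε ≤ s * (N + 1) := by
      rw [div_eq_mul_one_div]; gcongr
    linarith
  have hlog0 : 0 ≤ Real.log (1 + s / ε / 256) :=
    Real.log_nonneg (by linarith [(by positivity : 0 ≤ s / ε / 256)])
  have h5 : ε * s ^ 3 * Real.log (1 + s / ε / 256)
      ≤ ε ^ 2 * (s ^ 3 * (N + 1) * Real.log (1 + s * (N + 1) / 256)) := by
    have e1 : ε ≤ ε ^ 2 * (N + 1) := by
      have : 1 ≤ (N + 1) * ε := by rwa [div_le_iff₀ hε0] at hN1
      nlinarith
    calc ε * s ^ 3 * Real.log (1 + s / ε / 256)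
        ≤ (ε ^ 2 * (N + 1)) * s ^ 3 * Real.log (1 + s * (N + 1) / 256) := by gcongr
      _ = _ := by ring
  have h6 := mul_le_mul_of_nonneg_left hmain hε2.le
  linarith
end

section
/- There is a constant C > 0 such that for all ε ∈ (0,1/2) and δ ∈ (0,1) with 2ε ≤ δ^{1/2}, for every integer N ≥ 1 with 2^{−N} ≤ ε/δ^{1/2}, and for every λ ∈ (0, 2^{−N}), there exists a spin field u ∈ S₀(ε) with E_{ε,δ}(u) ≤ C·( N·δ²·λ + δ²·2^{−N} + ε²·δ·N/λ + ε²·δ·2^{−N}/λ² ) (energy estimate for the branching-type competitor, inequality (5.2) in the proof of Proposition 5.1). -/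
open Real Finset

/-- Dyadic scales. -/
def hh (m : ℤ) (k : ℕ) : ℤ := 2 ^ k * m

/-- Zigzag function of period `h`. -/
def tri (h p : ℤ) : ℤ := min (p % h) (h - p % h)

/-- The branching potential in rotated coordinates. -/
def Phi (m : ℤ) : ℕ → ℤ → ℤ → ℤ
  | 0, _, _ => 0
  | k + 1, p, q =>
    if p / hh m k = q / hh m k then Phi m k p q
    else min (tri (hh m k) p) (tri (hh m k) q)

lemma hh_pos {m : ℤ} (hm : 0 < m) (k : ℕ) : 0 < hh m k := by
  unfold hh; positivity

lemma hh_ge {m : ℤ} (hm : 0 < m) (k : ℕ) : m ≤ hh m k := by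
  unfold hh
  have : (1 : ℤ) ≤ 2 ^ k := one_le_pow₀ (by norm_num)
  nlinarith

lemma hh_succ (m : ℤ) (k : ℕ) : hh m (k + 1) = 2 * hh m k := by
  unfold hh; ring

lemma tri_nonneg {h : ℤ} (hh : 0 < h) (p : ℤ) : 0 ≤ tri h p := by
  have h1 := Int.emod_nonneg p hh.ne'
  have h2 := Int.emod_lt_of_pos p hh
  unfold tri; omega

lemma tri_decomp {h : ℤ} (hh : 0 < h) (u r : ℤ) (h0 : 0 ≤ r) (h1 : r < h) :
    (h * u + r) / h = u ∧ tri h (h * u + r) = min r (h - r) := by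
  have e1 : (h * u + r) % h = r := by
    rw [Int.mul_add_emod_self_left]; exact Int.emod_eq_of_lt h0 h1
  refine ⟨?_, by unfold tri; rw [e1]⟩
  rw [Int.mul_add_ediv_left _ _ hh.ne', Int.ediv_eq_zero_of_lt h0 h1, add_zero]

lemma tri_double {h : ℤ} (hh : 0 < h) (p : ℤ) : tri h p ≤ tri (2 * h) p := by
  have e := Int.emod_emod_of_dvd p (show h ∣ 2 * h from ⟨2, by ring⟩)
  have h1 := Int.emod_nonneg p (show 2 * h ≠ 0 by omega)
  have h2 := Int.emod_lt_of_pos p (show 0 < 2 * h by omega)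
  unfold tri
  rw [← e]
  generalize p % (2 * h) = s at *
  rcases lt_or_ge s h with hs | hs
  · rw [Int.emod_eq_of_lt h1 hs]; omega
  · have : s % h = s - h := by
      rw [← Int.sub_emod_right, Int.emod_eq_of_lt (by omega) (by omega)]
    rw [this]; omega

lemma Phi_symm (m : ℤ) (k : ℕ) (p q : ℤ) : Phi m k p q = Phi m k q p := by
  induction k with
  | zero => rfl
  | succ k ih =>
    simp only [Phi]
    rw [ih, min_comm]
    by_cases h : p / hh m k = q / hh m k
    · rw [if_pos h, if_pos h.symm]
    · rw [if_neg h, if_neg (Ne.symm h)]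

lemma Phi_diag (m : ℤ) (k : ℕ) (p : ℤ) : Phi m k p p = 0 := by
  induction k with
  | zero => rfl
  | succ k ih => simp [Phi, ih]

lemma Phi_bounds {m : ℤ} (hm : 0 < m) (k : ℕ) (p q : ℤ) :
    0 ≤ Phi m k p q ∧ Phi m k p q ≤ tri (hh m k) p := by
  induction k with
  | zero => exact ⟨le_refl _, tri_nonneg (hh_pos hm 0) p⟩
  | succ k ih =>
    have a := tri_double (hh_pos hm k) p
    have b := tri_nonneg (hh_pos hm k) p
    have c := tri_nonneg (hh_pos hm k) q
    rw [hh_succ]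
    simp only [Phi]
    split_ifs
    · exact ⟨ih.1, ih.2.trans a⟩
    · omega

lemma Phi_succ_bounds {m : ℤ} (hm : 0 < m) (k : ℕ) (p q : ℤ) :
    0 ≤ Phi m (k + 1) p q ∧ Phi m (k + 1) p q ≤ tri (hh m k) p := by
  have b := tri_nonneg (hh_pos hm k) p
  have c := tri_nonneg (hh_pos hm k) q
  have d := Phi_bounds hm k p q
  simp only [Phi]
  split_ifs
  · exact d
  · omega

lemma tri_step {h : ℤ} (hh : 0 < h) (p : ℤ) :
    ((p + 1) / h = p / h ∧ |tri h (p + 1) - tri h p| ≤ 1) ∨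
      (tri h (p + 1) = 0 ∧ tri h p ≤ 1) := by
  have e := Int.mul_ediv_add_emod p h
  have h1 := Int.emod_nonneg p hh.ne'
  have h2 := Int.emod_lt_of_pos p hh
  set u := p / h with hu
  set r := p % h with hr
  have a := tri_decomp hh u r h1 h2
  rw [e] at a
  rcases lt_or_ge (r + 1) h with hs | hs
  · left
    have b := tri_decomp hh u (r + 1) (by omega) hs
    rw [← add_assoc, e] at b
    refine ⟨b.1, ?_⟩
    rw [b.2, a.2, abs_le]; omega
  · right
    have b := tri_decomp hh (u + 1) 0 le_rfl hh
    have : h * (u + 1) + 0 = p + 1 := by linarith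
    rw [this] at b
    rw [b.2, a.2]; omega

lemma Phi_lip {m : ℤ} (hm : 0 < m) (k : ℕ) (p q : ℤ) :
    |Phi m k (p + 1) q - Phi m k p q| ≤ 1 := by
  induction k with
  | zero => simp [Phi]
  | succ k ih =>
    rcases tri_step (hh_pos hm k) p with ⟨h1, h2⟩ | ⟨h1, h2⟩
    · simp only [Phi]
      rw [h1]
      split_ifs
      · exact ih
      · rw [abs_le] at *; omega
    · have a := Phi_succ_bounds hm k (p + 1) q
      have b := Phi_succ_bounds hm k p q
      rw [abs_le]; omega

/-- `n` is close to a half-integer multiple of `h`. -/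
def Near (m h n : ℤ) : Prop := ∃ u : ℤ, |2 * n - u * h| ≤ 16 * m

/-- Bad points at level `k`. -/
def Bad (m : ℤ) (k : ℕ) (p q : ℤ) : Prop :=
  p / hh m (k + 1) = q / hh m (k + 1) ∧
    (Near m (hh m k) p ∨ Near m (hh m k) q ∨ Near m (hh m k) (p - q) ∨ Near m (hh m k) (p + q))

/-- `F` is affine of slope `±1` in one of its variables near `(p,q)`. -/
def Aff (m : ℤ) (F : ℤ → ℤ → ℤ) (p q : ℤ) : Prop :=
  ∃ s c : ℤ, (s = 1 ∨ s = -1) ∧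
    ((∀ p' q', |p' - p| ≤ 4 * m → |q' - q| ≤ 4 * m → F p' q' = s * p' + c) ∨
     (∀ p' q', |p' - p| ≤ 4 * m → |q' - q| ≤ 4 * m → F p' q' = s * q' + c))

lemma near_decomp {m h p : ℤ} (hm : 0 < m) (hh : 0 < h) (hp : ¬ Near m h p) :
    ∃ u r : ℤ, p = h * u + r ∧ 8 * m < r ∧ 8 * m < h - r ∧ 16 * m < |2 * r - h| := by
  have e := Int.mul_ediv_add_emod p h
  have h1 := Int.emod_nonneg p hh.ne'
  have h2 := Int.emod_lt_of_pos p hh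
  set u := p / h with hu
  set r := p % h with hr
  refine ⟨u, r, e.symm, ?_, ?_, ?_⟩
  · by_contra hc
    exact hp ⟨2 * u, by rw [← e, show 2 * (h * u + r) - 2 * u * h = 2 * r by ring, abs_le]; omega⟩
  · by_contra hc
    exact hp ⟨2 * u + 2, by
      rw [← e, show 2 * (h * u + r) - (2 * u + 2) * h = 2 * r - 2 * h by ring, abs_le]; omega⟩
  · by_contra hc
    exact hp ⟨2 * u + 1, by
      rw [← e, show 2 * (h * u + r) - (2 * u + 1) * h = 2 * r - h by ring]; omega⟩

lemma good_floor {m h p : ℤ} (hm : 0 < m) (hh : 0 < h) (hp : ¬ Near m h p) (p' : ℤ)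
    (hp' : |p' - p| ≤ 4 * m) : p' / h = p / h := by
  obtain ⟨u, r, e, h1, h2, h3⟩ := near_decomp hm hh hp
  rw [abs_le] at hp'
  have a := (tri_decomp hh u r (by omega) (by omega)).1
  have b := (tri_decomp hh u (r + (p' - p)) (by omega) (by omega)).1
  rw [← e] at a
  rw [show h * u + (r + (p' - p)) = p' by rw [e]; ring] at b
  rw [a, b]

lemma good_step {m h p q : ℤ} (hm : 0 < m) (hh : 0 < h) (hp : ¬ Near m h p) (hq : ¬ Near m h q)
    (hd : ¬ Near m h (p - q)) (hs : ¬ Near m h (p + q)) :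
    Aff m (fun p q => min (tri h p) (tri h q)) p q := by
  obtain ⟨u, r, e, h1, h2, h3⟩ := near_decomp hm hh hp
  obtain ⟨v, t, f, g1, g2, g3⟩ := near_decomp hm hh hq
  have k1 : 8 * m < |r - t| := by
    by_contra hc
    refine hd ⟨2 * (u - v), ?_⟩
    rw [e, f, show 2 * (h * u + r - (h * v + t)) - 2 * (u - v) * h = 2 * (r - t) by ring]
    rw [abs_le]; rw [not_lt, abs_le] at hc; omega
  have k2 : 8 * m < |r + t - h| := by
    by_contra hc
    refine hs ⟨2 * (u + v) + 2, ?_⟩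
    rw [e, f, show 2 * (h * u + r + (h * v + t)) - (2 * (u + v) + 2) * h = 2 * (r + t - h) by ring]
    rw [abs_le]; rw [not_lt, abs_le] at hc; omega
  have P : ∀ p', |p' - p| ≤ 4 * m → tri h p' = min (r + (p' - p)) (h - (r + (p' - p))) := by
    intro p' hp'
    rw [abs_le] at hp'
    have b := (tri_decomp hh u (r + (p' - p)) (by omega) (by omega)).2
    rwa [show h * u + (r + (p' - p)) = p' by rw [e]; ring] at b
  have Q : ∀ q', |q' - q| ≤ 4 * m → tri h q' = min (t + (q' - q)) (h - (t + (q' - q))) := by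
    intro p' hp'
    rw [abs_le] at hp'
    have b := (tri_decomp hh v (t + (p' - q)) (by omega) (by omega)).2
    rwa [show h * v + (t + (p' - q)) = p' by rw [f]; ring] at b
  rw [lt_abs] at h3 g3 k1 k2
  rcases lt_or_ge (min r (h - r)) (min t (h - t)) with hc | hc
  · rcases lt_or_ge (2 * r) h with hr | hr
    · refine ⟨1, r - p, Or.inl rfl, Or.inl fun p' q' a b => ?_⟩
      simp only [P p' a, Q q' b]; rw [abs_le] at a b; omega
    · refine ⟨-1, h - r + p, Or.inr rfl, Or.inl fun p' q' a b => ?_⟩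
      simp only [P p' a, Q q' b]; rw [abs_le] at a b; omega
  · rcases lt_or_ge (2 * t) h with hr | hr
    · refine ⟨1, t - q, Or.inl rfl, Or.inr fun p' q' a b => ?_⟩
      simp only [P p' a, Q q' b]; rw [abs_le] at a b; omega
    · refine ⟨-1, h - t + q, Or.inr rfl, Or.inr fun p' q' a b => ?_⟩
      simp only [P p' a, Q q' b]; rw [abs_le] at a b; omega

lemma near_base {m : ℤ} (hm : 0 < m) (p : ℤ) : Near m (hh m 0) p := by
  have e := Int.mul_ediv_add_emod (2 * p) m
  have h1 := Int.emod_nonneg (2 * p) hm.ne'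
  have h2 := Int.emod_lt_of_pos (2 * p) hm
  refine ⟨2 * p / m, ?_⟩
  simp only [hh, pow_zero, one_mul]
  rw [mul_comm (2 * p / m), abs_le]; omega

lemma ediv_succ {m : ℤ} (hm : 0 < m) (k : ℕ) (p : ℤ) :
    p / hh m (k + 1) = (p / hh m k) / 2 := by
  rw [hh_succ, mul_comm, Int.ediv_ediv_of_nonneg (hh_pos hm k).le]

lemma Aff.congr {m : ℤ} {F G : ℤ → ℤ → ℤ} {p q : ℤ} (h : Aff m F p q)
    (e : ∀ p' q', |p' - p| ≤ 4 * m → |q' - q| ≤ 4 * m → G p' q' = F p' q') : Aff m G p q := by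
  obtain ⟨s, c, hs, h | h⟩ := h
  · exact ⟨s, c, hs, Or.inl fun p' q' a b => (e p' q' a b).trans (h p' q' a b)⟩
  · exact ⟨s, c, hs, Or.inr fun p' q' a b => (e p' q' a b).trans (h p' q' a b)⟩

lemma good_affine {m : ℤ} (hm : 0 < m) (n : ℕ) (p q : ℤ)
    (hpq : p / hh m (n + 1) = q / hh m (n + 1)) (hb : ∀ k < n + 1, ¬ Bad m k p q) :
    (∀ p', |p' - p| ≤ 4 * m → p' / hh m (n + 1) = p / hh m (n + 1)) ∧
    (∀ q', |q' - q| ≤ 4 * m → q' / hh m (n + 1) = q / hh m (n + 1)) ∧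
    8 * m < |p - q| ∧ Aff m (Phi m (n + 1)) p q := by
  induction n with
  | zero => exact absurd ⟨hpq, Or.inl (near_base hm p)⟩ (hb 0 (by omega))
  | succ n ih =>
    by_cases hc : p / hh m (n + 1) = q / hh m (n + 1)
    · obtain ⟨a, b, c, d⟩ := ih hc (fun k hk => hb k (by omega))
      refine ⟨fun p' hp' => ?_, fun p' hp' => ?_, c, d.congr fun p' q' hp' hq' => ?_⟩
      · rw [ediv_succ hm, ediv_succ hm (n + 1) p, a p' hp']
      · rw [ediv_succ hm, ediv_succ hm (n + 1) q, b p' hp']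
      · rw [Phi, if_pos]
        rw [a p' hp', b q' hq', hc]
    · have h := hb (n + 1) (by omega)
      unfold Bad at h
      push Not at h
      obtain ⟨h1, h2, h3, h4⟩ := h hpq
      have a := good_floor hm (hh_pos hm (n + 1)) h1
      have b := good_floor hm (hh_pos hm (n + 1)) h2
      refine ⟨fun p' hp' => ?_, fun p' hp' => ?_, ?_,
        (good_step hm (hh_pos hm (n + 1)) h1 h2 h3 h4).congr fun p' q' hp' hq' => ?_⟩
      · rw [ediv_succ hm, ediv_succ hm (n + 1) p, a p' hp']
      · rw [ediv_succ hm, ediv_succ hm (n + 1) q, b p' hp']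
      · by_contra hk
        refine h3 ⟨0, ?_⟩
        rw [not_lt, abs_le] at hk
        rw [abs_le]; omega
      · rw [Phi, if_neg]
        rw [a p' hp', b q' hq']; exact hc

lemma count_line {m h : ℤ} (hm : 0 < m) (hmh : m ≤ h) (A s : ℤ) (T : Finset ℤ)
    (hT : ∀ q ∈ T, q / (2 * h) = A ∧ Near m h (q + s)) : (T.card : ℤ) ≤ 629 * m := by
  have hh : 0 < h := by omega
  set X := 2 * (2 * h * A + s) with hX
  set u0 := X / h with hu0
  have e := Int.mul_ediv_add_emod X h
  have h1 := Int.emod_nonneg X hh.ne'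
  have h2 := Int.emod_lt_of_pos X hh
  have sub : T ⊆ (Finset.Icc (u0 - 16) (u0 + 20)).biUnion
      (fun u => Finset.Icc (u * h / 2 - s - 8 * m) (u * h / 2 - s + 8 * m)) := by
    intro q hq
    obtain ⟨ha, u, hu⟩ := hT q hq
    have f := Int.mul_ediv_add_emod q (2 * h)
    have f1 := Int.emod_nonneg q (show 2 * h ≠ 0 by omega)
    have f2 := Int.emod_lt_of_pos q (show 0 < 2 * h by omega)
    rw [ha] at f
    rw [abs_le] at hu
    rw [Finset.mem_biUnion]
    refine ⟨u, ?_, ?_⟩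
    · rw [Finset.mem_Icc]
      constructor
      · by_contra hc
        have : u + 1 ≤ u0 - 16 := by omega
        nlinarith
      · by_contra hc
        have : u0 + 21 ≤ u := by omega
        nlinarith
    · rw [Finset.mem_Icc]; omega
  have c1 := Finset.card_le_card sub
  have c2 := Finset.card_biUnion_le_card_mul (Finset.Icc (u0 - 16) (u0 + 20))
      (fun u => Finset.Icc (u * h / 2 - s - 8 * m) (u * h / 2 - s + 8 * m)) (17 * m).toNat (by
        intro u _
        rw [Int.card_Icc]
        apply Int.toNat_le_toNat; omega)
  have c3 : (Finset.Icc (u0 - 16) (u0 + 20)).card = 37 := by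
    rw [Int.card_Icc]; omega
  rw [c3] at c2
  omega

lemma count_fib (R c : ℤ) (hR : 0 ≤ R) (hc : 0 ≤ c) (f : ℤ × ℤ → ℤ) (S : Finset (ℤ × ℤ))
    (hf : ∀ x ∈ S, f x ∈ Finset.Ico 0 R)
    (hS : ∀ b, ((S.filter (fun x => f x = b)).card : ℤ) ≤ c) : (S.card : ℤ) ≤ c * R := by
  have := Finset.card_le_mul_card_image_of_maps_to hf c.toNat (fun b _ => by have := hS b; omega)
  rw [Int.card_Ico] at this
  zify at this
  rw [Int.toNat_of_nonneg hc, Int.toNat_of_nonneg (by omega)] at this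
  simpa using this

lemma near_neg {m h n : ℤ} (hn : Near m h n) : Near m h (-n) := by
  obtain ⟨u, hu⟩ := hn
  refine ⟨-u, ?_⟩
  rw [abs_le] at *
  constructor <;> linarith

open Classical in
lemma count_bad {m R : ℤ} (hm : 0 < m) (hR : 0 ≤ R) (k : ℕ) (S : Finset (ℤ × ℤ))
    (hS : ∀ x ∈ S, x.1 ∈ Finset.Ico 0 R ∧ x.2 ∈ Finset.Ico 0 R) :
    ((S.filter (fun x => Bad m k x.1 x.2)).card : ℤ) ≤ 4 * (629 * m * R) := by
  have hk := hh_ge hm k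
  set h := hh m k with hh
  -- fibres over the first coordinate
  have F1 : ∀ (G : ℤ → ℤ) (V : Finset (ℤ × ℤ)), V ⊆ S →
      (∀ x ∈ V, x.1 / (2 * h) = x.2 / (2 * h) ∧ Near m h (x.2 + G x.1)) →
      (V.card : ℤ) ≤ 629 * m * R := by
    intro G V hV hx
    apply count_fib R _ hR (by omega) Prod.fst V (fun x hx => (hS x (hV hx)).1)
    intro b
    have inj : Set.InjOn Prod.snd ((V.filter (fun x => x.1 = b) : Finset (ℤ × ℤ)) : Set (ℤ × ℤ)) := by
      intro x hx y hy hxy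
      simp only [Finset.coe_filter, Set.mem_ofPred_eq] at hx hy
      exact Prod.ext (hx.2.trans hy.2.symm) hxy
    rw [← Finset.card_image_of_injOn inj]
    apply count_line hm hk (b / (2 * h)) (G b)
    intro q hq
    simp only [Finset.mem_image, Finset.mem_filter] at hq
    obtain ⟨x, ⟨hxV, rfl⟩, rfl⟩ := hq
    exact ⟨(hx x hxV).1.symm, (hx x hxV).2⟩
  have F2 : ∀ (V : Finset (ℤ × ℤ)), V ⊆ S →
      (∀ x ∈ V, x.1 / (2 * h) = x.2 / (2 * h) ∧ Near m h x.1) →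
      (V.card : ℤ) ≤ 629 * m * R := by
    intro V hV hx
    apply count_fib R _ hR (by omega) Prod.snd V (fun x hx => (hS x (hV hx)).2)
    intro b
    have inj : Set.InjOn Prod.fst ((V.filter (fun x => x.2 = b) : Finset (ℤ × ℤ)) : Set (ℤ × ℤ)) := by
      intro x hx y hy hxy
      simp only [Finset.coe_filter, Set.mem_ofPred_eq] at hx hy
      exact Prod.ext hxy (hx.2.trans hy.2.symm)
    rw [← Finset.card_image_of_injOn inj]
    apply count_line hm hk (b / (2 * h)) 0
    intro q hq
    simp only [Finset.mem_image, Finset.mem_filter] at hq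
    obtain ⟨x, ⟨hxV, rfl⟩, rfl⟩ := hq
    exact ⟨(hx x hxV).1, by simpa using (hx x hxV).2⟩
  let V (N : ℤ × ℤ → ℤ) : Finset (ℤ × ℤ) :=
    S.filter (fun x => x.1 / (2 * h) = x.2 / (2 * h) ∧ Near m h (N x))
  have hVS : ∀ N, V N ⊆ S := fun N => Finset.filter_subset _ _
  have b1 := F2 (V fun x => x.1) (hVS _) (fun x hx => (Finset.mem_filter.1 hx).2)
  have b2 := F1 (fun _ => 0) (V fun x => x.2) (hVS _)
    (fun x hx => by simpa using (Finset.mem_filter.1 hx).2)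
  have b3 := F1 (fun p => -p) (V fun x => x.1 - x.2) (hVS _)
    (fun x hx => by
      have := (Finset.mem_filter.1 hx).2
      refine ⟨this.1, ?_⟩
      have := near_neg this.2
      rwa [show -(x.1 - x.2) = x.2 + -x.1 by ring] at this)
  have b4 := F1 (fun p => p) (V fun x => x.1 + x.2) (hVS _)
    (fun x hx => by
      have := (Finset.mem_filter.1 hx).2
      refine ⟨this.1, ?_⟩
      rw [add_comm]; exact this.2)
  have sub : S.filter (fun x => Bad m k x.1 x.2) ⊆
      ((V fun x => x.1) ∪ (V fun x => x.2)) ∪ ((V fun x => x.1 - x.2) ∪ (V fun x => x.1 + x.2)) := by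
    intro x hx
    rw [Finset.mem_filter] at hx
    obtain ⟨hxS, h1, h2⟩ := hx
    rw [hh_succ] at h1
    simp only [V, Finset.mem_union, Finset.mem_filter]
    tauto
  have c := Finset.card_le_card sub
  have c1 := Finset.card_union_le ((V fun x => x.1) ∪ (V fun x => x.2))
    ((V fun x => x.1 - x.2) ∪ (V fun x => x.1 + x.2))
  have c2 := Finset.card_union_le (V fun x => x.1) (V fun x => x.2)
  have c3 := Finset.card_union_le (V fun x => x.1 - x.2) (V fun x => x.1 + x.2)
  zify at c c1 c2 c3
  linarith

/-- The branching potential in the original coordinates, extended by zero. -/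
def Psi (m : ℤ) (n : ℕ) (L x y : ℤ) : ℤ := if x ≤ 0 then 0 else Phi m n (x + y + L) (y - x + L)

lemma Phi_lip' {m : ℤ} (hm : 0 < m) (k : ℕ) (p q : ℤ) :
    |Phi m k p (q + 1) - Phi m k p q| ≤ 1 := by
  rw [Phi_symm m k p, Phi_symm m k p]; exact Phi_lip hm k q p

lemma Psi_eq (m : ℤ) (n : ℕ) (L x y : ℤ) (hx : 0 ≤ x) :
    Psi m n L x y = Phi m n (x + y + L) (y - x + L) := by
  unfold Psi
  split_ifs with h
  · have : x = 0 := by omega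
    subst this
    simp [Phi_diag]
  · rfl

lemma Psi_lip_x {m : ℤ} (hm : 0 < m) (n : ℕ) (L x y : ℤ) :
    |Psi m n L (x + 1) y - Psi m n L x y| ≤ 2 := by
  rcases lt_or_ge x 0 with h | h
  · unfold Psi
    rw [if_pos (by omega), if_pos (by omega)]; norm_num
  · rw [Psi_eq _ _ _ _ _ h, Psi_eq _ _ _ _ _ (by omega)]
    have a := Phi_lip hm n (x + y + L) (y - x + L)
    have b := Phi_lip' hm n (x + y + L + 1) (y - x + L - 1)
    rw [show y - x + L - 1 + 1 = y - x + L by ring] at b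
    rw [show x + 1 + y + L = x + y + L + 1 by ring, show y - (x + 1) + L = y - x + L - 1 by ring]
    rw [abs_le] at *; omega

lemma Psi_lip_y {m : ℤ} (hm : 0 < m) (n : ℕ) (L x y : ℤ) :
    |Psi m n L x (y + 1) - Psi m n L x y| ≤ 2 := by
  rcases lt_or_ge x 0 with h | h
  · unfold Psi
    rw [if_pos (by omega), if_pos (by omega)]; norm_num
  · rw [Psi_eq _ _ _ _ _ h, Psi_eq _ _ _ _ _ h]
    have a := Phi_lip hm n (x + y + L) (y - x + L)
    have b := Phi_lip' hm n (x + y + L + 1) (y - x + L)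
    rw [show x + (y + 1) + L = x + y + L + 1 by ring, show y + 1 - x + L = y - x + L + 1 by ring]
    rw [abs_le] at *; omega

lemma Psi_good {m : ℤ} (hm : 0 < m) (n : ℕ) (L i j : ℤ) (hi : 0 ≤ i)
    (hpq : (i + j + L) / hh m (n + 1) = (j - i + L) / hh m (n + 1))
    (hb : ∀ k < n + 1, ¬ Bad m k (i + j + L) (j - i + L)) :
    ∃ s t c : ℤ, (s = 1 ∨ s = -1) ∧ (t = 1 ∨ t = -1) ∧
      ∀ x y, i - m ≤ x → x ≤ i + 2 → j - m ≤ y → y ≤ j + 2 →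
        Psi m (n + 1) L x y = s * x + t * y + c := by
  obtain ⟨-, -, h8, s, c, hs, h | h⟩ := good_affine hm n _ _ hpq hb
  · refine ⟨s, s, s * L + c, hs, hs, fun x y h1 h2 h3 h4 => ?_⟩
    rw [lt_abs] at h8
    rw [Psi_eq _ _ _ _ _ (by omega), h _ _ (by rw [abs_le]; omega) (by rw [abs_le]; omega)]
    ring
  · refine ⟨-s, s, s * L + c, by omega, hs, fun x y h1 h2 h3 h4 => ?_⟩
    rw [lt_abs] at h8
    rw [Psi_eq _ _ _ _ _ (by omega), h _ _ (by rw [abs_le]; omega) (by rw [abs_le]; omega)]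
    ring

/-- Box average over `M × M` windows. -/
noncomputable def avg (M : ℕ) (F : ℤ → ℤ → ℤ) (i j : ℤ) : ℝ :=
  (∑ b ∈ Finset.range M, ∑ a ∈ Finset.range M, (F (i - a) (j - b) : ℝ)) / (M : ℝ) ^ 2

lemma avg_swap (M : ℕ) (F : ℤ → ℤ → ℤ) (i j : ℤ) :
    avg M F i j = avg M (fun x y => F y x) j i := by
  unfold avg
  rw [Finset.sum_comm]

lemma avg_diff {M : ℕ} (hM : 0 < M) (F : ℤ → ℤ → ℤ) (hF : ∀ x y, |F (x + 1) y - F x y| ≤ 2)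
    (i j : ℤ) : |avg M F (i + 1) j - avg M F i j| ≤ 2 := by
  have hM' : (0 : ℝ) < M := by exact_mod_cast hM
  unfold avg
  rw [← sub_div, ← Finset.sum_sub_distrib, abs_div, abs_of_pos (show (0 : ℝ) < (M : ℝ) ^ 2 by positivity),
    div_le_iff₀ (by positivity)]
  refine (Finset.abs_sum_le_sum_abs _ _).trans ?_
  have : ∀ b ∈ Finset.range M, |∑ a ∈ Finset.range M, (F (i + 1 - a) (j - b) : ℝ) -
      ∑ a ∈ Finset.range M, (F (i - a) (j - b) : ℝ)| ≤ M * 2 := by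
    intro b _
    rw [← Finset.sum_sub_distrib]
    refine (Finset.abs_sum_le_sum_abs _ _).trans ?_
    refine (Finset.sum_le_card_nsmul _ _ 2 ?_).trans (by simp)
    intro a _
    have := hF (i - a) (j - b)
    rw [show i - a + 1 = i + 1 - (a : ℤ) by ring] at this
    exact_mod_cast this
  refine (Finset.sum_le_card_nsmul _ _ _ this).trans ?_
  simp only [Finset.card_range, nsmul_eq_mul]
  apply le_of_eq; ring

lemma avg_second {M : ℕ} (hM : 0 < M) (F : ℤ → ℤ → ℤ) (hF : ∀ x y, |F (x + 1) y - F x y| ≤ 2)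
    (i j : ℤ) :
    |(avg M F (i + 2) j - avg M F (i + 1) j) - (avg M F (i + 1) j - avg M F i j)| ≤ 4 / M := by
  have hM' : (0 : ℝ) < M := by exact_mod_cast hM
  unfold avg
  rw [← sub_div, ← sub_div, ← sub_div, ← Finset.sum_sub_distrib, ← Finset.sum_sub_distrib,
    ← Finset.sum_sub_distrib, abs_div, abs_of_pos (show (0 : ℝ) < (M : ℝ) ^ 2 by positivity),
    div_le_div_iff₀ (by positivity) hM']
  have : ∀ b ∈ Finset.range M, |(∑ a ∈ Finset.range M, (F (i + 2 - a) (j - b) : ℝ) -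
      ∑ a ∈ Finset.range M, (F (i + 1 - a) (j - b) : ℝ)) -
      (∑ a ∈ Finset.range M, (F (i + 1 - a) (j - b) : ℝ) -
      ∑ a ∈ Finset.range M, (F (i - a) (j - b) : ℝ))| ≤ 4 := by
    intro b _
    rw [← Finset.sum_sub_distrib, ← Finset.sum_sub_distrib, ← Finset.sum_sub_distrib]
    let g : ℕ → ℝ := fun a => (F (i + 2 - a) (j - b) : ℝ) - F (i + 1 - a) (j - b)
    have e : ∀ a ∈ Finset.range M, ((F (i + 2 - a) (j - b) : ℝ) - F (i + 1 - a) (j - b)) -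
        ((F (i + 1 - a) (j - b) : ℝ) - F (i - a) (j - b)) = g a - g (a + 1) := by
      intro a _
      simp only [g]
      push_cast
      rw [show i + 2 - ((a : ℤ) + 1) = i + 1 - a by ring, show i + 1 - ((a : ℤ) + 1) = i - a by ring]
    have hg : ∀ a, |g a| ≤ 2 := by
      intro a
      have := hF (i + 1 - a) (j - b)
      rw [show i + 1 - a + 1 = i + 2 - (a : ℤ) by ring] at this
      simp only [g]
      exact_mod_cast this
    rw [Finset.sum_congr rfl e, Finset.sum_range_sub']
    have h0 := hg 0
    have h1 := hg M
    rw [abs_le] at *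
    constructor <;> linarith
  have h2 := (Finset.abs_sum_le_sum_abs _ _).trans (Finset.sum_le_card_nsmul _ _ _ this)
  simp only [Finset.card_range, nsmul_eq_mul] at h2
  nlinarith

lemma avg_affine {M : ℕ} (hM : 0 < M) (F : ℤ → ℤ → ℤ) (i j s t c : ℤ)
    (h : ∀ x y, i - M ≤ x → x ≤ i + 2 → j - M ≤ y → y ≤ j + 2 → F x y = s * x + t * y + c) :
    avg M F (i + 1) j - avg M F i j = s ∧ avg M F (i + 2) j - avg M F (i + 1) j = s := by
  have hM' : (0 : ℝ) < M := by exact_mod_cast hM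
  have key : ∀ d : ℤ, 0 ≤ d → d ≤ 1 → avg M F (i + d + 1) j - avg M F (i + d) j = s := by
    intro d hd hd1
    unfold avg
    rw [← sub_div, ← Finset.sum_sub_distrib, div_eq_iff (by positivity)]
    have : ∀ b ∈ Finset.range M, ∑ a ∈ Finset.range M, (F (i + d + 1 - a) (j - b) : ℝ) -
        ∑ a ∈ Finset.range M, (F (i + d - a) (j - b) : ℝ) = M * s := by
      intro b hb
      rw [← Finset.sum_sub_distrib]
      have : ∀ a ∈ Finset.range M, (F (i + d + 1 - a) (j - b) : ℝ) - F (i + d - a) (j - b) = s := by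
        intro a ha
        rw [Finset.mem_range] at ha hb
        rw [h _ _ (by omega) (by omega) (by omega) (by omega),
          h _ _ (by omega) (by omega) (by omega) (by omega)]
        push_cast; ring
      rw [Finset.sum_congr rfl this]; simp
    rw [Finset.sum_congr rfl this]
    simp; ring
  have k0 := key 0 le_rfl (by norm_num)
  have k1 := key 1 (by norm_num) le_rfl
  rw [add_zero] at k0
  rw [show i + 1 + 1 = i + 2 by ring] at k1
  exact ⟨k0, k1⟩

lemma spin_cell (c x y z : ℝ) :
    sqnorm ((Real.sin x, Real.cos x) - (2 * c) • (Real.sin y, Real.cos y) +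
      (Real.sin z, Real.cos z)) =
    (Real.cos (y - x) + Real.cos (z - y) - 2 * c) ^ 2 +
      (Real.sin (z - y) - Real.sin (y - x)) ^ 2 := by
  have e1 : x = y - (y - x) := by ring
  have e2 : z = y + (z - y) := by ring
  generalize y - x = a at *
  generalize z - y = b at *
  subst e1 e2
  simp only [sqnorm, Prod.fst_add, Prod.fst_sub, Prod.snd_add, Prod.snd_sub, Prod.smul_fst,
    Prod.smul_snd, smul_eq_mul]
  rw [Real.sin_sub, Real.cos_sub, Real.sin_add, Real.cos_add]
  have h := Real.sin_sq_add_cos_sq y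
  linear_combination ((Real.cos a + Real.cos b - 2 * c) ^ 2 +
      (Real.sin b - Real.sin a) ^ 2) * h

lemma cell_bound {δ α a b M : ℝ} (hα5 : α ^ 2 ≤ 5 * δ) (hα0 : 0 ≤ α)
    (hδ : 0 < δ) (ha : |a| ≤ 2 * α) (hb : |b| ≤ 2 * α) (hab : |b - a| ≤ 4 / M * α)
    (hM : 0 < M) (hM2 : 1 / M ^ 2 ≤ δ) :
    (Real.cos a + Real.cos b - 2 * (1 - δ)) ^ 2 + (Real.sin b - Real.sin a) ^ 2 ≤ 480 * δ ^ 2 := by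
  have key : ∀ t : ℝ, |t| ≤ 2 * α → 1 - 10 * δ ≤ Real.cos t := by
    intro t ht
    have h1 := Real.one_sub_sq_div_two_le_cos (x := t)
    have h2 : t ^ 2 ≤ (2 * α) ^ 2 := sq_le_sq' (by linarith [neg_abs_le t]) ((le_abs_self t).trans ht)
    nlinarith
  have a1 := key a ha
  have b1 := key b hb
  have a2 := Real.cos_le_one a
  have b2 := Real.cos_le_one b
  have h1 : (Real.cos a + Real.cos b - 2 * (1 - δ)) ^ 2 ≤ (20 * δ) ^ 2 :=
    sq_le_sq' (by linarith) (by linarith)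
  have h2 : (Real.sin b - Real.sin a) ^ 2 ≤ (4 / M * α) ^ 2 := by
    have : |Real.sin b - Real.sin a| ≤ |b - a| := Real.abs_sin_sub_sin_le b a
    have h := this.trans hab
    exact sq_le_sq' (by linarith [neg_abs_le (Real.sin b - Real.sin a)]) ((le_abs_self _).trans h)
  have h3 : (4 / M * α) ^ 2 = 16 * ((1 / M ^ 2) * α ^ 2) := by
    field_simp; ring
  have h4 : (1 / M ^ 2) * α ^ 2 ≤ δ * (5 * δ) := by gcongr
  nlinarith

lemma cell_zero {δ α a b : ℝ} (hα : Real.cos α = 1 - δ) (h : (a = α ∧ b = α) ∨ (a = -α ∧ b = -α)) :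
    (Real.cos a + Real.cos b - 2 * (1 - δ)) ^ 2 + (Real.sin b - Real.sin a) ^ 2 = 0 := by
  rcases h with ⟨rfl, rfl⟩ | ⟨rfl, rfl⟩
  · rw [hα]; ring
  · rw [Real.cos_neg, hα]; ring

/-- Points that are bad at some level. -/
def BadAny (m : ℤ) (N : ℕ) (x : ℤ × ℤ) : Prop :=
  ∃ k < N + 2, Bad m k (x.1 + x.2 + hh m N) (x.2 - x.1 + hh m N)

open Classical in
lemma count_total {m : ℤ} (hm : 0 < m) (N : ℕ) (S : Finset (ℤ × ℤ))
    (hS : ∀ x ∈ S, 0 ≤ x.1 ∧ x.1 < hh m N ∧ 0 ≤ x.2 ∧ x.2 < hh m N) :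
    ((S.filter (BadAny m N)).card : ℤ)
      ≤ (N + 2) * (4 * (629 * m * (4 * hh m N))) := by
  set L := hh m N with hL
  have hLp : 0 < L := hh_pos hm N
  let f : ℤ × ℤ → ℤ × ℤ := fun x => (x.1 + x.2 + L, x.2 - x.1 + L)
  have finj : Function.Injective f := by
    intro x y hxy
    simp only [f, Prod.mk.injEq] at hxy
    exact Prod.ext (by omega) (by omega)
  have hI : ∀ y ∈ S.image f, y.1 ∈ Finset.Ico 0 (4 * L) ∧ y.2 ∈ Finset.Ico 0 (4 * L) := by
    intro y hy
    rw [Finset.mem_image] at hy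
    obtain ⟨x, hx, rfl⟩ := hy
    have := hS x hx
    simp only [f, Finset.mem_Ico]
    omega
  have sub : (S.filter (BadAny m N)).image f ⊆
      (Finset.range (N + 2)).biUnion
        (fun k => (S.image f).filter (fun y => Bad m k y.1 y.2)) := by
    intro y hy
    rw [Finset.mem_image] at hy
    obtain ⟨x, hx, rfl⟩ := hy
    rw [Finset.mem_filter] at hx
    obtain ⟨hxS, k, hk, hb⟩ := hx
    rw [Finset.mem_biUnion]
    exact ⟨k, Finset.mem_range.2 hk, Finset.mem_filter.2 ⟨Finset.mem_image_of_mem f hxS, hb⟩⟩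
  have c1 := Finset.card_le_card sub
  rw [Finset.card_image_of_injective _ finj] at c1
  have c2 := Finset.card_biUnion_le_card_mul (Finset.range (N + 2))
    (fun k => (S.image f).filter (fun y => Bad m k y.1 y.2))
    (4 * (629 * m * (4 * L))).toNat (by
      intro k _
      have := count_bad hm (show 0 ≤ 4 * L by omega) k (S.image f) hI
      omega)
  have c3 := c1.trans c2
  rw [Finset.card_range] at c3
  zify at c3
  rw [Int.toNat_of_nonneg (by positivity)] at c3
  exact c3

open Classical in
lemma sum_bound (S : Finset (ℤ × ℤ)) (P : ℤ × ℤ → Prop) (e : ℤ × ℤ → ℝ) (B c : ℝ) (hB : 0 ≤ B)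
    (hc : ((S.filter P).card : ℝ) ≤ c) (h1 : ∀ x ∈ S, e x ≤ B) (h0 : ∀ x ∈ S, ¬ P x → e x = 0) :
    ∑ x ∈ S, e x ≤ c * B := by
  rw [← Finset.sum_filter_add_sum_filter_not S P]
  have z : ∑ x ∈ S.filter (fun x => ¬ P x), e x = 0 :=
    Finset.sum_eq_zero fun x hx => h0 x (Finset.mem_filter.1 hx).1 (Finset.mem_filter.1 hx).2
  rw [z, add_zero]
  refine (Finset.sum_le_card_nsmul _ _ B fun x hx => h1 x (Finset.mem_filter.1 hx).1).trans ?_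
  rw [nsmul_eq_mul]
  gcongr

/-- The competitor. -/
noncomputable def comp (α : ℝ) (M N : ℕ) (p : ℤ × ℤ) : ℝ × ℝ :=
  (Real.sin (α * avg M (Psi M (N + 2) (hh M N)) p.1 p.2),
    Real.cos (α * avg M (Psi M (N + 2) (hh M N)) p.1 p.2))

lemma comp_zero (α : ℝ) (M N : ℕ) (j : ℤ) : comp α M N (0, j) = (0, 1) := by
  have : avg M (Psi M (N + 2) (hh M N)) 0 j = 0 := by
    unfold avg
    rw [Finset.sum_eq_zero, zero_div]
    intro b _
    apply Finset.sum_eq_zero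
    intro a _
    unfold Psi
    rw [if_pos (by omega)]; simp
  simp [comp, this]

lemma good_point {M N : ℕ} (hM : 0 < M) (i j : ℤ)
    (hi : 0 ≤ i) (hi' : i < hh M N) (hj : 0 ≤ j) (hj' : j < hh M N)
    (hb : ¬ BadAny M N (i, j)) :
    ∃ s t c : ℤ, (s = 1 ∨ s = -1) ∧ (t = 1 ∨ t = -1) ∧
      ∀ x y, i - M ≤ x → x ≤ i + 2 → j - M ≤ y → y ≤ j + 2 →
        Psi M (N + 2) (hh M N) x y = s * x + t * y + c := by
  have hm : (0 : ℤ) < M := by exact_mod_cast hM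
  unfold BadAny at hb
  push Not at hb
  refine Psi_good hm (N + 1) (hh M N) i j hi ?_ hb
  rw [hh_succ, hh_succ, Int.ediv_eq_zero_of_lt (by omega) (by omega),
    Int.ediv_eq_zero_of_lt (by omega) (by omega)]

lemma dir_bound {δ α : ℝ} {M : ℕ} (hM : 0 < M) (hα : Real.cos α = 1 - δ) (hα5 : α ^ 2 ≤ 5 * δ)
    (hα0 : 0 ≤ α) (hδ : 0 < δ) (hM2 : 1 / (M : ℝ) ^ 2 ≤ δ)
    (F : ℤ → ℤ → ℤ) (hF : ∀ x y, |F (x + 1) y - F x y| ≤ 2) (i j : ℤ) :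
    sqnorm ((Real.sin (α * avg M F i j), Real.cos (α * avg M F i j)) -
      (2 * (1 - δ)) • (Real.sin (α * avg M F (i + 1) j), Real.cos (α * avg M F (i + 1) j)) +
      (Real.sin (α * avg M F (i + 2) j), Real.cos (α * avg M F (i + 2) j))) ≤ 480 * δ ^ 2 ∧
    ((∃ s t c : ℤ, (s = 1 ∨ s = -1) ∧
      ∀ x y, i - M ≤ x → x ≤ i + 2 → j - M ≤ y → y ≤ j + 2 → F x y = s * x + t * y + c) →
      sqnorm ((Real.sin (α * avg M F i j), Real.cos (α * avg M F i j)) -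
      (2 * (1 - δ)) • (Real.sin (α * avg M F (i + 1) j), Real.cos (α * avg M F (i + 1) j)) +
      (Real.sin (α * avg M F (i + 2) j), Real.cos (α * avg M F (i + 2) j))) = 0) := by
  have hM' : (0 : ℝ) < M := by exact_mod_cast hM
  rw [spin_cell, ← mul_sub, ← mul_sub]
  constructor
  · have d1 := avg_diff hM F hF i j
    have d2 := avg_diff hM F hF (i + 1) j
    rw [show i + 1 + 1 = i + 2 by ring] at d2
    have d3 := avg_second hM F hF i j
    refine cell_bound hα5 hα0 hδ ?_ ?_ ?_ hM' hM2
    · rw [abs_mul, abs_of_nonneg hα0, mul_comm]; gcongr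
    · rw [abs_mul, abs_of_nonneg hα0, mul_comm]; gcongr
    · rw [← mul_sub, abs_mul, abs_of_nonneg hα0, mul_comm]; gcongr
  · rintro ⟨s, t, c, hs, h⟩
    obtain ⟨k0, k1⟩ := avg_affine hM F i j s t c h
    rw [k0, k1]
    apply cell_zero hα
    rcases hs with rfl | rfl
    · left; simp
    · right; simp

lemma dir_bound' {δ α : ℝ} {M : ℕ} (hM : 0 < M) (hα : Real.cos α = 1 - δ) (hα5 : α ^ 2 ≤ 5 * δ)
    (hα0 : 0 ≤ α) (hδ : 0 < δ) (hM2 : 1 / (M : ℝ) ^ 2 ≤ δ)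
    (F : ℤ → ℤ → ℤ) (hF : ∀ x y, |F x (y + 1) - F x y| ≤ 2) (i j : ℤ) :
    sqnorm ((Real.sin (α * avg M F i j), Real.cos (α * avg M F i j)) -
      (2 * (1 - δ)) • (Real.sin (α * avg M F i (j + 1)), Real.cos (α * avg M F i (j + 1))) +
      (Real.sin (α * avg M F i (j + 2)), Real.cos (α * avg M F i (j + 2)))) ≤ 480 * δ ^ 2 ∧
    ((∃ s t c : ℤ, (t = 1 ∨ t = -1) ∧
      ∀ x y, i - M ≤ x → x ≤ i + 2 → j - M ≤ y → y ≤ j + 2 → F x y = s * x + t * y + c) →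
      sqnorm ((Real.sin (α * avg M F i j), Real.cos (α * avg M F i j)) -
      (2 * (1 - δ)) • (Real.sin (α * avg M F i (j + 1)), Real.cos (α * avg M F i (j + 1))) +
      (Real.sin (α * avg M F i (j + 2)), Real.cos (α * avg M F i (j + 2)))) = 0) := by
  rw [avg_swap M F i j, avg_swap M F i (j + 1), avg_swap M F i (j + 2)]
  have h := dir_bound hM hα hα5 hα0 hδ hM2 (fun x y => F y x) (fun x y => hF y x) j i
  refine ⟨h.1, ?_⟩
  rintro ⟨s, t, c, ht, hc⟩
  exact h.2 ⟨t, s, c, ht, fun a b h1 h2 h3 h4 => by rw [hc b a h3 h4 h1 h2]; ring⟩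

/-- Inequality (5.2): energy estimate for the branching-type competitor. -/
theorem branching_competitor_estimate :
    ∃ C : ℝ, 0 < C ∧ ∀ ε δ : ℝ, ε ∈ Set.Ioo (0 : ℝ) (1 / 2) → δ ∈ Set.Ioo (0 : ℝ) 1 →
      2 * ε ≤ Real.sqrt δ →
      ∀ N : ℕ, 1 ≤ N → (2 : ℝ) ^ (-(N : ℤ)) ≤ ε / Real.sqrt δ →
      ∀ lam : ℝ, lam ∈ Set.Ioo (0 : ℝ) ((2 : ℝ) ^ (-(N : ℤ))) →
      ∃ u : ℤ × ℤ → ℝ × ℝ, InS0 ε u ∧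
        E ε δ u ≤ C * ((N : ℝ) * δ ^ 2 * lam + δ ^ 2 * (2 : ℝ) ^ (-(N : ℤ)) +
          ε ^ 2 * δ * (N : ℝ) / lam + ε ^ 2 * δ * (2 : ℝ) ^ (-(N : ℤ)) / lam ^ 2) := by
  refine ⟨480 * 16 * 629 * 12, by norm_num, ?_⟩
  rintro ε δ ⟨hε, -⟩ ⟨hδ, hδ1⟩ - N hN hNε lam ⟨hl, hl'⟩
  set σ := Real.sqrt δ with hσ
  have hσ0 : 0 < σ := Real.sqrt_pos.2 hδ
  have hσ2 : σ ^ 2 = δ := Real.sq_sqrt hδ.le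
  have hσ1 : σ ≤ 1 := by nlinarith
  have h2N : (2 : ℝ) ^ (-(N : ℤ)) = 1 / 2 ^ N := by
    rw [zpow_neg, zpow_natCast, one_div]
  have h2p : (0 : ℝ) < 2 ^ N := by positivity
  rw [h2N] at hNε hl'
  obtain ⟨M, hM⟩ : ∃ M : ℕ, M = ⌈1 / σ⌉₊ := ⟨_, rfl⟩
  have hM1 : 1 / σ ≤ M := by rw [hM]; exact Nat.le_ceil _
  have hM2 : (M : ℝ) < 1 / σ + 1 := by rw [hM]; exact Nat.ceil_lt_add_one (by positivity)
  have hM3 : (0 : ℝ) < M := lt_of_lt_of_le (by positivity) hM1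
  have hM0 : 0 < M := by exact_mod_cast hM3
  have hm : (0 : ℤ) < M := by exact_mod_cast hM0
  have hMσ : 1 ≤ M * σ := by rwa [div_le_iff₀ hσ0] at hM1
  have hMσ2 : M * σ ≤ 2 := by
    have : M * σ < (1 / σ + 1) * σ := by gcongr
    rw [add_mul, one_div_mul_cancel hσ0.ne'] at this
    linarith
  have hMδ : 1 / (M : ℝ) ^ 2 ≤ δ := by
    rw [div_le_iff₀ (by positivity), ← hσ2]; nlinarith
  have hMδ2 : (M : ℝ) ^ 2 * δ ≤ 4 := by
    rw [← hσ2, ← mul_pow]; nlinarith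
  have hK : Kof ε < hh M N := by
    have h1 : ((Kof ε : ℤ) : ℝ) < 1 / ε := by
      unfold Kof; push_cast
      linarith [Int.ceil_lt_add_one (1 / ε)]
    have h2 : 1 / ε ≤ 2 ^ N * M := by
      rw [div_le_div_iff₀ h2p hσ0] at hNε
      rw [div_le_iff₀ hε]
      have : 1 * σ * M ≤ ε * 2 ^ N * M := by gcongr
      nlinarith
    have h3 := h1.trans_le h2
    unfold hh
    exact_mod_cast h3
  obtain ⟨α, hα⟩ : ∃ α : ℝ, α = Real.arccos (1 - δ) := ⟨_, rfl⟩
  have hcos : Real.cos α = 1 - δ := by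
    rw [hα]; exact Real.cos_arccos (by linarith) (by linarith)
  have hα0 : 0 ≤ α := by rw [hα]; exact Real.arccos_nonneg _
  have hαπ : α ≤ π := by rw [hα]; exact Real.arccos_le_pi _
  have hα5 : α ^ 2 ≤ 5 * δ := by
    have h := Real.cos_le_one_sub_mul_cos_sq (x := α) (by rw [abs_of_nonneg hα0]; exact hαπ)
    rw [hcos] at h
    have hπ : π ^ 2 ≤ 10 := by nlinarith [Real.pi_lt_d2, Real.pi_pos]
    have hπ0 : 0 < π ^ 2 := by positivity
    have h1 : 2 / π ^ 2 * α ^ 2 ≤ δ := by linarith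
    rw [div_mul_eq_mul_div, div_le_iff₀ hπ0] at h1
    nlinarith
  have hLx := Psi_lip_x hm (N + 2) (hh M N)
  have hLy := Psi_lip_y hm (N + 2) (hh M N)
  have cnt : ∀ S : Finset (ℤ × ℤ),
      (∀ x ∈ S, 0 ≤ x.1 ∧ x.1 < hh M N ∧ 0 ≤ x.2 ∧ x.2 < hh M N) → ∀ e : ℤ × ℤ → ℝ,
      (∀ x ∈ S, e x ≤ 480 * δ ^ 2) →
      (∀ x ∈ S, (¬ BadAny M N x) → e x = 0) →
      ∑ x ∈ S, e x ≤ (N + 2) * (4 * (629 * M * (4 * (2 ^ N * M)))) * (480 * δ ^ 2) := by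
    intro S hS e h1 h0
    refine sum_bound S (BadAny M N) e _ _ (by positivity) ?_ h1 h0
    have := count_total hm N S hS
    have h : (((N : ℤ) + 2) * (4 * (629 * (M : ℤ) * (4 * hh M N))) : ℤ) =
      (((N + 2) * (4 * (629 * M * (4 * (2 ^ N * M)))) : ℕ) : ℤ) := by
      unfold hh; push_cast; ring
    rw [h] at this
    exact_mod_cast this
  refine ⟨comp α M N, ⟨fun p _ => ?_, fun j _ => comp_zero α M N j⟩, ?_⟩
  · simp [sqnorm, comp]
  have eH : Ehor ε δ (comp α M N) ≤ ε ^ 2 / 2 *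
      ((N + 2) * (4 * (629 * M * (4 * (2 ^ N * M)))) * (480 * δ ^ 2)) := by
    unfold Ehor
    gcongr
    have hS : ∀ x ∈ IdxH ε, 0 ≤ x.1 ∧ x.1 < hh M N ∧ 0 ≤ x.2 ∧ x.2 < hh M N := by
      intro x hx
      simp only [IdxH, Finset.mem_product, Finset.mem_Icc] at hx
      omega
    refine cnt _ hS _ (fun x _ => ?_) (fun x hx hb => ?_)
    · exact (dir_bound hM0 hcos hα5 hα0 hδ hMδ _ hLx x.1 x.2).1
    · obtain ⟨a1, a2, a3, a4⟩ := hS x hx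
      obtain ⟨s, t, c, hs, ht, h⟩ := good_point hM0 x.1 x.2 a1 a2 a3 a4 hb
      exact (dir_bound hM0 hcos hα5 hα0 hδ hMδ _ hLx x.1 x.2).2 ⟨s, t, c, hs, h⟩
  have eV : Ever ε δ (comp α M N) ≤ ε ^ 2 / 2 *
      ((N + 2) * (4 * (629 * M * (4 * (2 ^ N * M)))) * (480 * δ ^ 2)) := by
    unfold Ever
    gcongr
    have hS : ∀ x ∈ IdxV ε, 0 ≤ x.1 ∧ x.1 < hh M N ∧ 0 ≤ x.2 ∧ x.2 < hh M N := by
      intro x hx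
      simp only [IdxV, Finset.mem_product, Finset.mem_Icc] at hx
      omega
    refine cnt _ hS _ (fun x _ => ?_) (fun x hx hb => ?_)
    · exact (dir_bound' hM0 hcos hα5 hα0 hδ hMδ _ hLy x.1 x.2).1
    · obtain ⟨a1, a2, a3, a4⟩ := hS x hx
      obtain ⟨s, t, c, hs, ht, h⟩ := good_point hM0 x.1 x.2 a1 a2 a3 a4 hb
      exact (dir_bound' hM0 hcos hα5 hα0 hδ hMδ _ hLy x.1 x.2).2 ⟨s, t, c, ht, h⟩
  have hlam : (2 : ℝ) ^ N ≤ 1 / lam := by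
    rw [le_div_iff₀ hl]
    rw [lt_div_iff₀ h2p] at hl'
    linarith
  have hN' : (1 : ℝ) ≤ N := by exact_mod_cast hN
  have hNN : (N : ℝ) + 2 ≤ 3 * N := by linarith
  have main : E ε δ (comp α M N) ≤ 480 * 16 * 629 * 12 * (ε ^ 2 * δ * N / lam) := by
    calc E ε δ (comp α M N) = Ehor ε δ (comp α M N) + Ever ε δ (comp α M N) := rfl
      _ ≤ 480 * 16 * 629 * (ε ^ 2 * δ * ((N + 2) * 2 ^ N * ((M : ℝ) ^ 2 * δ))) := by
        refine (add_le_add eH eV).trans (le_of_eq ?_); ring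
      _ ≤ 480 * 16 * 629 * (ε ^ 2 * δ * ((3 * N) * (1 / lam) * 4)) := by gcongr
      _ = _ := by ring
  refine main.trans ?_
  have p1 : 0 ≤ (N : ℝ) * δ ^ 2 * lam := by positivity
  have p2 : 0 ≤ δ ^ 2 * (2 : ℝ) ^ (-(N : ℤ)) := by positivity
  have p3 : 0 ≤ ε ^ 2 * δ * (2 : ℝ) ^ (-(N : ℤ)) / lam ^ 2 := by positivity
  gcongr
  linarith
end
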